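/- arXiv:2411.06745 — 4 statements merged into one kernel-verified Lean document; each statement's English description precedes it below -/
import Mathlib

section
/- Let k be a field of characteristic not equal to 2 and f(z) = z² + c ∈ k[z] with f^r(0) = 0 for some integer r ≥ 1. Let K = k(t) be the rational function field, fix an algebraic closure of k(t), let K_n be the splitting field of f^n(X) − t over k(t) inside this closure, K_∞ = ⋃_{n≥1} K_n, and let k̄ be the algebraic closure of k inside the same closure. Then K_∞ ∩ k̄ = k(μ_{2^∞}), the field obtained from k by adjoining all roots of unity of 2-power order. -/
open Polynomial

/-- coefficients of the square root of a power series -/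
noncomputable def psSqrt {L : Type*} [Field L] (u : ℕ → L) (b : L) : ℕ → L
  | 0 => b
  | n + 1 => (u (n + 1) - ∑ i : Fin n, psSqrt u b (i.1 + 1) * psSqrt u b (n - i.1)) / (2 * b)
termination_by n => n
decreasing_by all_goals omega

theorem psSqrt_spec {L : Type*} [Field L] (h2 : (2 : L) ≠ 0) (u : PowerSeries L) (b : L)
    (hb : b ≠ 0) (hu : b ^ 2 = PowerSeries.constantCoeff u) :
    ∃ v : PowerSeries L, v ^ 2 = u ∧ PowerSeries.constantCoeff v = b := by
  refine ⟨PowerSeries.mk (psSqrt (fun n => PowerSeries.coeff n u) b), ?_, ?_⟩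
  · ext n
    rw [pow_two, PowerSeries.coeff_mul]
    simp only [PowerSeries.coeff_mk]
    rw [Finset.Nat.sum_antidiagonal_eq_sum_range_succ_mk]
    cases n with
    | zero => simp [psSqrt, ← hu, pow_two]
    | succ n =>
      rw [Finset.sum_range_succ, Finset.sum_range_succ']
      simp only [Nat.sub_self, Nat.sub_zero, Nat.add_sub_add_right]
      rw [psSqrt, psSqrt, Finset.sum_range]
      field_simp
      ring
  · rw [← PowerSeries.coeff_zero_eq_constantCoeff_apply, PowerSeries.coeff_mk, psSqrt]

/-- The image of `f^n(X) - z` splits over the fraction field of the power series. -/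
theorem iterate_splits {L M : Type*} [Field L] [Field M] [Algebra (PowerSeries L) M]
    [IsFractionRing (PowerSeries L) M] (h2 : (2 : L) ≠ 0)
    (hL : ∀ a : L, (∃ N : ℕ, a ^ 2 ^ N = 1) → ∃ b : L, b ^ 2 = a) (c : L)
    (G : ℕ → Polynomial M) (hG0 : G 0 = X)
    (hG : ∀ n, G (n + 1) = G n ^ 2 + C (algebraMap (PowerSeries L) M (PowerSeries.C c)))
    (n : ℕ) : ∀ u : PowerSeries L, (∃ N : ℕ, PowerSeries.constantCoeff u ^ 2 ^ N = 1) →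
      (G n - C (algebraMap (PowerSeries L) M u /
        algebraMap (PowerSeries L) M PowerSeries.X ^ 2 ^ n)).Splits := by
  have hX : algebraMap (PowerSeries L) M PowerSeries.X ≠ 0 := by
    rw [Ne, FaithfulSMul.algebraMap_eq_zero_iff]
    exact PowerSeries.X_ne_zero
  induction n with
  | zero => intro u _; rw [hG0]; exact Splits.X_sub_C _
  | succ n ih =>
    rintro u ⟨N, hN⟩
    obtain ⟨b, hb⟩ := hL _ ⟨N, hN⟩
    have hbN : b ^ 2 ^ (N + 1) = 1 := by rw [pow_succ', pow_mul, hb, hN]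
    have hb0 : b ≠ 0 := by
      rintro rfl
      rw [zero_pow (by positivity)] at hbN
      exact zero_ne_one hbN
    obtain ⟨v, hv, hvb⟩ := psSqrt_spec h2
      (u - PowerSeries.C c * PowerSeries.X ^ 2 ^ (n + 1)) b hb0 (by simp [hb])
    have h1 := ih v ⟨N + 1, by rw [hvb, hbN]⟩
    have h3 := ih (-v) ⟨N + 1, by
      rw [map_neg, hvb, Even.neg_pow ⟨2 ^ N, by rw [pow_succ]; ring⟩, hbN]⟩
    have := h1.mul h3
    convert this using 1
    rw [hG]
    have key : C (algebraMap (PowerSeries L) M u /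
        algebraMap (PowerSeries L) M PowerSeries.X ^ 2 ^ (n + 1)) =
        C (algebraMap (PowerSeries L) M v /
        algebraMap (PowerSeries L) M PowerSeries.X ^ 2 ^ n) ^ 2
        + C (algebraMap (PowerSeries L) M (PowerSeries.C c)) := by
      rw [← C_pow, ← C_add]
      congr 1
      rw [div_pow, ← map_pow _ v, hv, map_sub, map_mul, map_pow]
      field_simp
      ring
    rw [key, map_neg, neg_div, C_neg]
    ring

/-- Elements of the fraction field of power series algebraic over constants: a root exists in L. -/
theorem exists_root_of_integral {k L M : Type*} [Field k] [Field L] [Field M]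
    [Algebra (PowerSeries L) M]
    [IsFractionRing (PowerSeries L) M] (i : k →+* L) (p : Polynomial k) (hp : p.Monic) (y : M)
    (hy : p.eval₂ ((algebraMap (PowerSeries L) M).comp (PowerSeries.C.comp i)) y = 0) :
    ∃ v : PowerSeries L, algebraMap (PowerSeries L) M v = y ∧
      p.eval₂ i (PowerSeries.constantCoeff v) = 0 := by
  have hint : IsIntegral (PowerSeries L) y := by
    refine ⟨p.map (PowerSeries.C.comp i), hp.map _, ?_⟩
    rw [eval₂_map, hy]
  obtain ⟨v, hv⟩ := IsIntegrallyClosed.algebraMap_eq_of_integral hint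
  refine ⟨v, hv, ?_⟩
  have h0 : p.eval₂ (PowerSeries.C.comp i) v = 0 := by
    apply FaithfulSMul.algebraMap_injective (PowerSeries L) M
    rw [hom_eval₂, hv, hy, map_zero]
  have := congrArg PowerSeries.constantCoeff h0
  rw [hom_eval₂, map_zero] at this
  convert this using 2
  ext a; simp

/-- Embedding of the rational function field sending `t` to `X ^ (-N)`. -/
theorem exists_ratFunc_hom {k L M : Type*} [Field k] [Field L] [Field M]
    [Algebra (PowerSeries L) M]
    [IsFractionRing (PowerSeries L) M] (i : k →+* L) (N : ℕ) (hN : 0 < N) :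
    ∃ φ : RatFunc k →+* M,
      (∀ a, φ (algebraMap k (RatFunc k) a) = algebraMap (PowerSeries L) M (PowerSeries.C (i a))) ∧
      φ RatFunc.X = 1 / algebraMap (PowerSeries L) M PowerSeries.X ^ N := by
  have hX : algebraMap (PowerSeries L) M PowerSeries.X ≠ 0 := by
    rw [Ne, FaithfulSMul.algebraMap_eq_zero_iff]
    exact PowerSeries.X_ne_zero
  set z : M := 1 / algebraMap (PowerSeries L) M PowerSeries.X ^ N with hz
  set j : k →+* M := (algebraMap (PowerSeries L) M).comp (PowerSeries.C.comp i) with hj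
  have hinj : Function.Injective (eval₂RingHom j z) := by
    rw [injective_iff_map_eq_zero]
    intro p hp
    by_contra hp0
    obtain ⟨v, hv, -⟩ := exists_root_of_integral (M := M) i (p * C p.leadingCoeff⁻¹)
      (monic_mul_leadingCoeff_inv hp0) z (by
        rw [eval₂_mul]
        rw [coe_eval₂RingHom] at hp
        rw [← hj, hp, zero_mul])
    have h1 : v * PowerSeries.X ^ N = 1 := by
      apply FaithfulSMul.algebraMap_injective (PowerSeries L) M
      rw [map_mul, hv, map_pow, map_one, hz]
      field_simp
    have := congrArg PowerSeries.constantCoeff h1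
    simp [hN.ne'] at this
  have hle : nonZeroDivisors (Polynomial k) ≤ (nonZeroDivisors M).comap (eval₂RingHom j z) :=
    nonZeroDivisors_le_comap_nonZeroDivisors_of_injective _ hinj
  refine ⟨RatFunc.liftRingHom (eval₂RingHom j z) hle, ?_, ?_⟩
  · intro a
    have : algebraMap k (RatFunc k) a = algebraMap (Polynomial k) (RatFunc k) (C a) := by
      simp
    rw [this, RatFunc.liftRingHom_algebraMap]
    simp [hj]
  · rw [← RatFunc.algebraMap_X, RatFunc.liftRingHom_algebraMap]
    simp

theorem exists_lift_adjoin {K Ω M : Type*} [Field K] [Field Ω] [Field M] [Algebra K Ω]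
    (φ : K →+* M) (p : Polynomial K) (hp : p ≠ 0) (h : (p.map φ).Splits) :
    ∃ ψ : IntermediateField.adjoin K (p.rootSet Ω) →+* M, ∀ a, ψ (algebraMap K _ a) = φ a := by
  let := φ.toAlgebra
  have : Nonempty (IntermediateField.adjoin K (p.rootSet Ω) →ₐ[K] M) := by
    apply IntermediateField.nonempty_algHom_adjoin_of_splits
    intro s hs
    have hs' : aeval s p = 0 := by
      rw [mem_rootSet] at hs; exact hs.2
    refine ⟨IsAlgebraic.isIntegral ⟨p, hp, hs'⟩, ?_⟩
    refine Splits.of_dvd (g := p.map φ) h (Polynomial.map_ne_zero hp) ?_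
    exact Polynomial.map_dvd _ (minpoly.dvd _ _ hs')
  obtain ⟨ψ⟩ := this
  exact ⟨ψ, fun a => ψ.commutes a⟩

/-- If `S` contains the whole backward orbit of `x`, then `x - f^j(0)` is, up to sign, a
`2^m`-th power in `S`. -/
theorem sub_orbit_eq_pow {Ω : Type*} [Field Ω] [IsAlgClosed Ω] (S : Subfield Ω) (c : Ω)
    (hcS : c ∈ S) (r : ℕ) (hr : 1 ≤ r) (hper : (fun z : Ω => z ^ 2 + c)^[r] 0 = 0) (m : ℕ) :
    ∀ x : Ω, (∀ n y, (fun z : Ω => z ^ 2 + c)^[n] y = x → y ∈ S) →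
      ∀ j, ∃ w ∈ S, x - (fun z : Ω => z ^ 2 + c)^[j] 0 = w ^ 2 ^ m ∨
        x - (fun z : Ω => z ^ 2 + c)^[j] 0 = - w ^ 2 ^ m := by
  have horb : ∀ j, (fun z : Ω => z ^ 2 + c)^[j] 0 ∈ S := by
    intro j
    induction j with
    | zero => exact S.zero_mem
    | succ j ih =>
      rw [Function.iterate_succ_apply']
      exact S.add_mem (S.pow_mem ih 2) hcS
  induction m with
  | zero =>
    intro x hx j
    exact ⟨x - (fun z : Ω => z ^ 2 + c)^[j] 0, S.sub_mem (hx 0 x rfl) (horb j), Or.inl (by simp)⟩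
  | succ m ih =>
    have hmain : ∀ j, ∀ x : Ω, (∀ n y, (fun z : Ω => z ^ 2 + c)^[n] y = x → y ∈ S) →
        ∃ w ∈ S, x - (fun z : Ω => z ^ 2 + c)^[j + 1] 0 = w ^ 2 ^ (m + 1) ∨
        x - (fun z : Ω => z ^ 2 + c)^[j + 1] 0 = - w ^ 2 ^ (m + 1) := by
      intro j
      induction j with
      | zero =>
        intro x hx
        obtain ⟨y, hy⟩ := IsAlgClosed.exists_pow_nat_eq (x - c) (n := 2) (by norm_num)
        have hyx : ∀ n z, (fun z : Ω => z ^ 2 + c)^[n] z = y → z ∈ S := by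
          intro n z hz
          apply hx (n + 1) z
          rw [Function.iterate_succ_apply', hz]
          simp [hy]
        obtain ⟨w, hw, h⟩ := ih y hyx 0
        refine ⟨w, hw, Or.inl ?_⟩
        simp only [Function.iterate_zero, id, sub_zero] at h
        have : x - (fun z : Ω => z ^ 2 + c)^[0 + 1] 0 = y ^ 2 := by simp [hy]
        rw [this, pow_succ 2 m, pow_mul]
        rcases h with h | h <;> rw [h]
        ring
      | succ j ihj =>
        intro x hx
        obtain ⟨y, hy⟩ := IsAlgClosed.exists_pow_nat_eq (x - c) (n := 2) (by norm_num)
        have hyx : ∀ n z, (fun z : Ω => z ^ 2 + c)^[n] z = y → z ∈ S := by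
          intro n z hz
          apply hx (n + 1) z
          rw [Function.iterate_succ_apply', hz]
          simp [hy]
        have hyx' : ∀ n z, (fun z : Ω => z ^ 2 + c)^[n] z = -y → z ∈ S := by
          intro n z hz
          apply hx (n + 1) z
          rw [Function.iterate_succ_apply', hz]
          simp [hy]
        obtain ⟨w, hw, h⟩ := ihj y hyx
        obtain ⟨w', hw', h'⟩ := ihj (-y) hyx'
        refine ⟨w * w', S.mul_mem hw hw', ?_⟩
        have : x - (fun z : Ω => z ^ 2 + c)^[j + 1 + 1] 0 =
            -((y - (fun z : Ω => z ^ 2 + c)^[j + 1] 0) *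
              (-y - (fun z : Ω => z ^ 2 + c)^[j + 1] 0)) := by
          rw [Function.iterate_succ_apply']
          linear_combination -hy
        rw [this, mul_pow]
        rcases h with h | h <;> rcases h' with h' | h' <;> rw [h, h']
        · right; ring
        · left; ring
        · left; ring
        · right; ring
    intro x hx j
    cases j with
    | zero =>
      have := hmain (r - 1) x hx
      rw [Nat.sub_add_cancel hr, hper] at this
      simpa using this
    | succ j => exact hmain j x hx

theorem irreducible_pow_sub (k : Type*) [Field k] (c : k) (N : ℕ) (hN : 0 < N) :
    Irreducible ((X : (RatFunc k)[X]) ^ N -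
      C (RatFunc.X - algebraMap k (RatFunc k) c)) := by
  have hmon : ((X : k[X][X]) ^ N - C (X - C c)).Monic := monic_X_pow_sub_C _ hN.ne'
  have hdeg : ((X : k[X][X]) ^ N - C (X - C c)).natDegree = N := natDegree_X_pow_sub_C
  have hprime : (Ideal.span {(X - C c : k[X])}).IsPrime :=
    (Ideal.span_singleton_prime (X_sub_C_ne_zero c)).2 (prime_X_sub_C c)
  have hirr : Irreducible ((X : k[X][X]) ^ N - C (X - C c)) := by
    apply irreducible_of_eisenstein_criterion hprime
    · rw [hmon.leadingCoeff]
      exact fun h => hprime.ne_top ((Ideal.eq_top_iff_one _).2 h)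
    · intro n hn
      rw [degree_eq_natDegree hmon.ne_zero, hdeg, Nat.cast_lt] at hn
      rw [coeff_sub, coeff_X_pow, if_neg hn.ne, zero_sub, neg_mem_iff, coeff_C]
      split_ifs
      · exact Ideal.mem_span_singleton_self _
      · exact zero_mem _
    · rw [degree_eq_natDegree hmon.ne_zero, hdeg]
      exact_mod_cast hN
    · rw [coeff_sub, coeff_X_pow, if_neg hN.ne, zero_sub, neg_mem_iff, coeff_C_zero,
        Ideal.span_singleton_pow, Ideal.mem_span_singleton, pow_two]
      intro h
      have h1 := (mul_dvd_mul_iff_left (X_sub_C_ne_zero c)).1 (h.trans (mul_one (X - C c)).symm.dvd)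
      exact (prime_X_sub_C c).not_isUnit (isUnit_of_dvd_one h1)
    · exact hmon.isPrimitive
  rw [hmon.irreducible_iff_irreducible_map_fraction_map (K := RatFunc k)] at hirr
  convert hirr using 1
  simp

/-- A normal subextension of the closure which contains one root of an irreducible polynomial
contains all. -/
theorem mem_of_normal {K Ω : Type*} [Field K] [Field Ω] [Algebra K Ω] (E : IntermediateField K Ω)
    [hE : Normal K E] (p : K[X]) (hp : Irreducible p) (x y : Ω) (hx : x ∈ E)
    (hxp : aeval x p = 0) (hyp : aeval y p = 0) : y ∈ E := by
  have hs := hE.splits ⟨x, hx⟩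
  have hm : aeval y (minpoly K (⟨x, hx⟩ : E)) = 0 := by
    have h1 : aeval (⟨x, hx⟩ : E) p = 0 := by
      apply Subtype.val_injective
      have := Polynomial.aeval_algebraMap_apply Ω (⟨x, hx⟩ : E) p
      simpa [hxp] using this.symm
    have h2 := minpoly.eq_of_irreducible hp h1
    rw [← h2, map_mul, hyp, zero_mul]
  have hy : y ∈ (algebraMap E Ω).range := by
    have hne : minpoly K (⟨x, hx⟩ : E) ≠ 0 := minpoly.ne_zero (hE.isIntegral _)
    apply hs.mem_range_of_isRoot (Polynomial.map_ne_zero hne)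
    rw [IsRoot, eval_map_algebraMap, aeval_map_algebraMap, hm]
  obtain ⟨e, rfl⟩ := hy
  exact e.2

theorem eval_aux {k K Ω : Type*} [Field k] [Field K] [Field Ω] [Algebra k K] [Algebra K Ω]
    [Algebra k Ω] [IsScalarTower k K Ω] (x : Ω) (E : IntermediateField K Ω) (hn : x ∈ E) :
    (minpoly k x).eval₂ ((algebraMap K E).comp (algebraMap k K)) (⟨x, hn⟩ : E) = 0 := by
  apply FaithfulSMul.algebraMap_injective E Ω
  rw [hom_eval₂, map_zero, ← RingHom.comp_assoc, ← IsScalarTower.algebraMap_eq K E Ω,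
    ← IsScalarTower.algebraMap_eq k K Ω]
  exact minpoly.aeval k x

theorem mem_adjoin_aux {K Ω : Type*} [Field K] [Field Ω] [Algebra K Ω]
    {S : Set Ω} {x : Ω} (h : x ∈ S) : x ∈ IntermediateField.adjoin K S :=
  IntermediateField.subset_adjoin K S h

theorem mem_iSup_aux {K Ω : Type*} [Field K] [Field Ω] [Algebra K Ω]
    (T : ℕ → IntermediateField K Ω) (n : ℕ) (x : Ω) (h : x ∈ T n) : x ∈ ⨆ n, T n :=
  (le_iSup T n) h

theorem normal_adjoin_mu (k Ω : Type*) [Field k] [Field Ω] [Algebra k Ω] [IsAlgClosed Ω] :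
    Normal k (IntermediateField.adjoin k {x : Ω | ∃ n : ℕ, x ^ (2 ^ n) = 1}) := by
  have hne : ∀ n : ℕ, ((X : k[X]) ^ 2 ^ n - C 1) ≠ 0 := fun n =>
    X_pow_sub_C_ne_zero (by positivity) _
  have h : IntermediateField.adjoin k {x : Ω | ∃ n : ℕ, x ^ (2 ^ n) = 1} =
      ⨆ n : ℕ, IntermediateField.adjoin k (((X : k[X]) ^ 2 ^ n - C 1).rootSet Ω) := by
    apply le_antisymm
    · rw [IntermediateField.adjoin_le_iff]
      rintro x ⟨n, hn⟩
      rw [SetLike.mem_coe]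
      refine mem_iSup_aux _ n _ ?_
      apply mem_adjoin_aux
      rw [mem_rootSet]
      exact ⟨hne n, by simp [hn]⟩
    · apply iSup_le
      intro n
      apply IntermediateField.adjoin.mono
      intro x hx
      rw [mem_rootSet] at hx
      refine ⟨n, ?_⟩
      have := hx.2
      simpa [sub_eq_zero] using this
  rw [h]
  exact IntermediateField.normal_iSup (h := fun n => Normal.of_isSplittingField
    (hFEp := IntermediateField.adjoin_rootSet_isSplittingField (IsAlgClosed.splits _)))

section main

variable {k Ω : Type*} [Field k] [Field Ω] [Algebra (RatFunc k) Ω] [Algebra k Ω]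
  [IsScalarTower k (RatFunc k) Ω] [IsAlgClosed Ω] (c : k) (F : ℕ → Polynomial k)

theorem natDegree_iter (hF0 : F 0 = X)
    (hFs : ∀ n : ℕ, F (n+1) = (X ^ 2 + C c).comp (F n)) (n : ℕ) :
    (F n).natDegree = 2 ^ n := by
  induction n with
  | zero => simp [hF0]
  | succ n ih => rw [hFs, natDegree_comp, ih, natDegree_X_pow_add_C, pow_succ']

theorem poly_ne_zero (hF0 : F 0 = X)
    (hFs : ∀ n : ℕ, F (n+1) = (X ^ 2 + C c).comp (F n)) (n : ℕ) :
    ((F n).map (algebraMap k (RatFunc k)) - C RatFunc.X) ≠ 0 := by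
  apply ne_zero_of_natDegree_gt (n := 0)
  rw [natDegree_sub_C, natDegree_map, natDegree_iter c F hF0 hFs]
  positivity

theorem mem_rootSet_iff (hF0 : F 0 = X)
    (hFs : ∀ n : ℕ, F (n+1) = (X ^ 2 + C c).comp (F n)) (n : ℕ) (y : Ω) :
    y ∈ ((F n).map (algebraMap k (RatFunc k)) - C RatFunc.X).rootSet Ω ↔
      (fun z : Ω => z ^ 2 + algebraMap k Ω c)^[n] y = algebraMap (RatFunc k) Ω RatFunc.X := by
  have h : ∀ n, aeval y (F n) = (fun z : Ω => z ^ 2 + algebraMap k Ω c)^[n] y := by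
    intro n
    induction n with
    | zero => simp [hF0]
    | succ n ih => rw [hFs, Function.iterate_succ_apply', ← ih]; simp
  rw [mem_rootSet, ← h, map_sub, aeval_map_algebraMap, aeval_C, sub_eq_zero]
  exact and_iff_right (poly_ne_zero c F hF0 hFs n)

theorem core_part {L M : Type*} [Field L] [Field M] [Algebra k L] [Algebra (PowerSeries L) M]
    [IsFractionRing (PowerSeries L) M] (hF0 : F 0 = X)
    (hFs : ∀ n : ℕ, F (n+1) = (X ^ 2 + C c).comp (F n)) (h2 : (2 : L) ≠ 0)
    (hL : ∀ a : L, (∃ N : ℕ, a ^ 2 ^ N = 1) → ∃ b : L, b ^ 2 = a) (n : ℕ) (x : Ω)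
    (hn : x ∈ IntermediateField.adjoin (RatFunc k)
        ((((F (n+1)).map (algebraMap k (RatFunc k)) - C RatFunc.X)).rootSet Ω))
    (hxi : IsIntegral k x) :
    ∃ a : L, (minpoly k x).eval₂ (algebraMap k L) a = 0 := by
  obtain ⟨φ, hφ, hφX⟩ := exists_ratFunc_hom (M := M)
    (algebraMap k L) (2 ^ (n + 1)) (by positivity)
  have hsp := iterate_splits (M := M) h2 hL (algebraMap k L c)
    (fun n => (F n).map (φ.comp (algebraMap k (RatFunc k)))) (by simp [hF0])
    (by intro n; rw [hFs, ← hφ]; simp) (n + 1) 1 ⟨0, by simp⟩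
  obtain ⟨ψ, hψ⟩ := exists_lift_adjoin (Ω := Ω) φ _ (poly_ne_zero c F hF0 hFs (n + 1)) (by
    rw [Polynomial.map_sub, Polynomial.map_map, map_C, hφX]
    rw [map_one] at hsp
    exact hsp)
  obtain ⟨v, hv', hv⟩ := exists_root_of_integral (M := M)
    (algebraMap k L) (minpoly k x) (minpoly.monic hxi) (ψ ⟨x, hn⟩) (by
      have h0 := eval_aux (k := k) (K := RatFunc k) x _ hn
      have h4 := congrArg ψ h0
      rw [hom_eval₂, map_zero] at h4
      convert h4 using 2
      ext a
      exact (hφ a).symm.trans (hψ _).symm)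
  exact ⟨_, hv⟩

theorem le_part (hchar : ringChar k ≠ 2) (hF0 : F 0 = X)
    (hFs : ∀ n : ℕ, F (n+1) = (X ^ 2 + C c).comp (F n)) (x : Ω)
    (hx : x ∈ (⨆ n : ℕ, IntermediateField.adjoin (RatFunc k)
        ((((F (n+1)).map (algebraMap k (RatFunc k)) - C RatFunc.X)).rootSet Ω) :
        IntermediateField (RatFunc k) Ω)) (hxa : IsAlgebraic k x) :
    x ∈ IntermediateField.adjoin k {x : Ω | ∃ n : ℕ, x ^ (2^n) = 1} := by
  rw [← SetLike.mem_coe, IntermediateField.coe_iSup_of_directed, Set.mem_iUnion] at hx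
  swap
  · apply Monotone.directed_le
    apply monotone_nat_of_le_succ
    intro n
    rw [IntermediateField.adjoin_le_iff]
    intro y hy
    rw [mem_rootSet_iff c F hF0 hFs] at hy
    obtain ⟨z, hz⟩ := IsAlgClosed.exists_pow_nat_eq (y - algebraMap k Ω c) (n := 2) (by norm_num)
    have hzy : y = z ^ 2 + algebraMap k Ω c := by rw [hz]; ring
    have hzm : z ∈ IntermediateField.adjoin (RatFunc k)
        ((((F (n+1+1)).map (algebraMap k (RatFunc k)) - C RatFunc.X)).rootSet Ω) := by
      apply mem_adjoin_aux
      rw [mem_rootSet_iff c F hF0 hFs, Function.iterate_succ_apply, ← hzy, hy]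
    rw [hzy, IsScalarTower.algebraMap_apply k (RatFunc k) Ω]
    exact add_mem (pow_mem hzm 2) (IntermediateField.algebraMap_mem _ _)
  obtain ⟨n, hn⟩ := hx
  have hnorm := normal_adjoin_mu k Ω
  generalize hLdef : IntermediateField.adjoin k {x : Ω | ∃ n : ℕ, x ^ (2^n) = 1} = L at hnorm ⊢
  have h2 : (2 : L) ≠ 0 := by
    have : (2 : k) ≠ 0 := Ring.two_ne_zero hchar
    rw [← map_ofNat (algebraMap k L) 2]
    exact (_root_.map_ne_zero _).2 this
  have hL : ∀ a : L, (∃ N : ℕ, a ^ 2 ^ N = 1) → ∃ b : L, b ^ 2 = a := by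
    rintro a ⟨N, hN⟩
    obtain ⟨b, hb⟩ := IsAlgClosed.exists_pow_nat_eq (a : Ω) (n := 2) (by norm_num)
    have hbL : b ∈ L := by
      rw [← hLdef]
      apply mem_adjoin_aux
      refine ⟨N + 1, ?_⟩
      rw [pow_succ', pow_mul, hb]
      exact_mod_cast congrArg Subtype.val hN
    exact ⟨⟨b, hbL⟩, Subtype.ext hb⟩
  have hxi : IsIntegral k x := hxa.isIntegral
  obtain ⟨a, ha⟩ := core_part (M := FractionRing (PowerSeries L)) c F hF0 hFs h2 hL n x hn hxi
  refine mem_of_normal L (minpoly k x) (minpoly.irreducible hxi) (a : Ω) x a.2 ?_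
    (minpoly.aeval k x)
  have h5 := congrArg (algebraMap L Ω) ha
  rw [hom_eval₂, map_zero, ← IsScalarTower.algebraMap_eq] at h5
  exact h5

theorem ge_part (hF0 : F 0 = X) (r : ℕ) (hr : 1 ≤ r)
    (hper : (fun z : k => z ^ 2 + c)^[r] 0 = 0)
    (hFs : ∀ n : ℕ, F (n+1) = (X ^ 2 + C c).comp (F n)) (x : Ω) (m : ℕ) (hx : x ^ 2 ^ m = 1) :
    x ∈ (⨆ n : ℕ, IntermediateField.adjoin (RatFunc k)
        ((((F (n+1)).map (algebraMap k (RatFunc k)) - C RatFunc.X)).rootSet Ω) :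
        IntermediateField (RatFunc k) Ω) := by
  have hnorm : Normal (RatFunc k) (⨆ n : ℕ, IntermediateField.adjoin (RatFunc k)
        ((((F (n+1)).map (algebraMap k (RatFunc k)) - C RatFunc.X)).rootSet Ω) :
        IntermediateField (RatFunc k) Ω) :=
    IntermediateField.normal_iSup (h := fun n => Normal.of_isSplittingField
      (hFEp := IntermediateField.adjoin_rootSet_isSplittingField (IsAlgClosed.splits _)))
  have hmem : ∀ n y, (fun z : Ω => z ^ 2 + algebraMap k Ω c)^[n] y =
      algebraMap (RatFunc k) Ω RatFunc.X → y ∈ (⨆ n : ℕ, IntermediateField.adjoin (RatFunc k)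
        ((((F (n+1)).map (algebraMap k (RatFunc k)) - C RatFunc.X)).rootSet Ω) :
        IntermediateField (RatFunc k) Ω) := by
    intro n y hy
    cases n with
    | zero =>
      rw [Function.iterate_zero, id] at hy
      rw [hy]
      exact IntermediateField.algebraMap_mem _ _
    | succ n =>
      refine mem_iSup_aux _ n _ ?_
      apply mem_adjoin_aux
      rwa [mem_rootSet_iff c F hF0 hFs]
  generalize (⨆ n : ℕ, IntermediateField.adjoin (RatFunc k)
        ((((F (n+1)).map (algebraMap k (RatFunc k)) - C RatFunc.X)).rootSet Ω) :
        IntermediateField (RatFunc k) Ω) = E at hnorm hmem ⊢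
  have hper' : (fun z : Ω => z ^ 2 + algebraMap k Ω c)^[r] 0 = 0 := by
    have : Function.Semiconj (algebraMap k Ω) (fun z : k => z ^ 2 + c)
      (fun z : Ω => z ^ 2 + algebraMap k Ω c) := fun z => by simp
    have h := (this.iterate_right r) 0
    rw [hper, map_zero] at h
    exact h.symm
  obtain ⟨y, hy⟩ := IsAlgClosed.exists_pow_nat_eq
    (algebraMap (RatFunc k) Ω RatFunc.X - algebraMap k Ω c) (n := 2) (by norm_num)
  obtain ⟨w, hw, h⟩ := sub_orbit_eq_pow E.toSubfield (algebraMap k Ω c) (by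
    rw [IsScalarTower.algebraMap_apply k (RatFunc k) Ω]
    exact IntermediateField.algebraMap_mem _ _) r hr hper' m y (by
      intro n z hz
      apply hmem (n + 1) z
      rw [Function.iterate_succ_apply', hz]
      simp [hy]) 0
  rw [Function.iterate_zero, id, sub_zero] at h
  have hwt : w ^ 2 ^ (m + 1) =
      algebraMap (RatFunc k) Ω (RatFunc.X - algebraMap k (RatFunc k) c) := by
    rw [map_sub, ← IsScalarTower.algebraMap_apply, ← hy, pow_succ 2 m, pow_mul]
    rcases h with h | h <;> rw [h]
    ring
  have hirr := irreducible_pow_sub k c (2 ^ (m + 1)) (by positivity)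
  have hw0 : w ≠ 0 := by
    rintro rfl
    rw [zero_pow (by positivity)] at hwt
    have h0 := (map_eq_zero _).1 hwt.symm
    rw [h0, C_0, sub_zero] at hirr
    exact not_irreducible_pow (by rw [Ne, Nat.pow_eq_one]; omega) hirr
  have hxw : x * w ∈ E := by
    refine mem_of_normal E _ hirr w (x * w) hw ?_ ?_
    · simp only [map_sub, map_pow, aeval_X, aeval_C, hwt, sub_self]
    · simp only [map_sub, map_pow, aeval_X, aeval_C, mul_pow, hwt]
      rw [pow_succ 2 m, pow_mul, hx, one_pow, one_mul, sub_self]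
  have := div_mem hxw hw
  rwa [mul_div_cancel_right₀ _ hw0] at this

end main

/-- Let `k` be a field of characteristic `≠ 2` and `f(z) = z² + c ∈ k[z]`
with `f^r(0) = 0` for some `r ≥ 1`. Let `K = k(t)` be the rational function field, `Ω` an
algebraic closure of `k(t)`, `F n` the polynomial iterate `f^n` over `k`, `K_n` the
splitting field of `f^n(X) − t` over `k(t)` inside `Ω` (the field generated by the roots),
and `K_∞ = ⋃_{n≥1} K_n`. Then `K_∞ ∩ k̄ = k(μ_{2^∞})`: the intersection of `K_∞` with the
algebraic closure of `k` inside `Ω` is the field obtained from `k` by adjoining all roots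
of unity of `2`-power order. -/
theorem constant_field_extension (k : Type*) [Field k] (hchar : ringChar k ≠ 2) (c : k)
    (r : ℕ) (hr : 1 ≤ r)
    (hper : (fun z : k => z ^ 2 + c)^[r] 0 = 0)
    (F : ℕ → Polynomial k)
    (hF0 : F 0 = X)
    (hFs : ∀ n : ℕ, F (n+1) = (X ^ 2 + C c).comp (F n)) :
    ((⨆ n : ℕ, IntermediateField.adjoin (RatFunc k)
        ((((F (n+1)).map (algebraMap k (RatFunc k)) - C RatFunc.X)).rootSet
          (AlgebraicClosure (RatFunc k))) :
        IntermediateField (RatFunc k) (AlgebraicClosure (RatFunc k))) : Set (AlgebraicClosure (RatFunc k)))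
      ∩ {x : AlgebraicClosure (RatFunc k) | IsAlgebraic k x}
    = ((IntermediateField.adjoin k
        {x : AlgebraicClosure (RatFunc k) | ∃ n : ℕ, x ^ (2^n) = 1} :
        IntermediateField k (AlgebraicClosure (RatFunc k))) : Set (AlgebraicClosure (RatFunc k))) := by
  apply Set.eq_of_subset_of_subset
  · rintro x ⟨hx, hxa⟩
    exact le_part c F hchar hF0 hFs x hx hxa
  · intro x hx
    have h1 : IntermediateField.adjoin k
        {x : AlgebraicClosure (RatFunc k) | ∃ n : ℕ, x ^ (2^n) = 1} ≤
        ((⨆ n : ℕ, IntermediateField.adjoin (RatFunc k)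
        ((((F (n+1)).map (algebraMap k (RatFunc k)) - C RatFunc.X)).rootSet
          (AlgebraicClosure (RatFunc k))) :
        IntermediateField (RatFunc k) (AlgebraicClosure (RatFunc k)))).restrictScalars k := by
      rw [IntermediateField.adjoin_le_iff]
      rintro y ⟨m, hm⟩
      exact ge_part c F hF0 r hr hper hFs y m hm
    have hn := normal_adjoin_mu k (AlgebraicClosure (RatFunc k))
    refine ⟨h1 hx, ?_⟩
    have h2 := (hn.isIntegral ⟨x, hx⟩).isAlgebraic
    exact h2.algebraMap (A := AlgebraicClosure (RatFunc k))
end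

section
/- Let k be any field with a fixed algebraic closure k̄. Then the following are equivalent: (i) k̄ contains a primitive 8th root of unity ζ_8 and [k(ζ_8) : k] = 4; (ii) k has characteristic 0 and k ∩ ℚ(μ_{2^∞}) = ℚ, where ℚ(μ_{2^∞}) denotes the subfield of k̄ generated over the prime field ℚ by all roots of unity of 2-power order, and the intersection is taken inside k̄. -/
universe u

open Polynomial IntermediateField in
lemma z8_quad {K : Type*} [Field K] {E : Type*} [Field E] [Algebra K E] (a : K)
    (ha : ∀ b : K, b ^ 2 ≠ a) (x : E) (hx : minpoly K x = X ^ 2 - C a)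
    (b : K⟮x⟯) (hb : b ^ 2 = AdjoinSimple.gen K x) :
    ∃ u v : K, u ^ 2 + a * v ^ 2 = 0 ∧ 2 * u * v = 1 := by
  have hint : IsIntegral K x := by
    by_contra h
    have h2 := minpoly.eq_zero h
    rw [hx] at h2
    exact X_pow_sub_C_ne_zero (by norm_num) a h2
  have hg : (AdjoinSimple.gen K x) ^ 2 = algebraMap K K⟮x⟯ a := by
    have h := minpoly.aeval K (AdjoinSimple.gen K x)
    rw [minpoly_gen, hx] at h
    simpa [sub_eq_zero] using h
  obtain ⟨f, hf, hfb⟩ := (adjoin.powerBasis hint).exists_eq_aeval b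
  rw [adjoin.powerBasis_dim, hx, natDegree_X_pow_sub_C] at hf
  rw [adjoin.powerBasis_gen] at hfb
  have hf1 : f.natDegree ≤ 1 := by omega
  obtain ⟨v, u, rfl⟩ := exists_eq_X_add_C_of_natDegree_le_one hf1
  simp only [map_add, map_mul, aeval_C, aeval_X] at hfb
  generalize AdjoinSimple.gen K x = g at *
  have key : algebraMap K K⟮x⟯ (u ^ 2 + a * v ^ 2) + algebraMap K K⟮x⟯ (2 * u * v - 1) * g = 0 := by
    simp only [map_add, map_mul, map_sub, map_pow, map_one, map_ofNat]
    rw [hfb] at hb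
    linear_combination hb - (algebraMap K K⟮x⟯ v)^2 * hg
  have hinj := (algebraMap K K⟮x⟯).injective
  by_cases hB : 2 * u * v - 1 = 0
  · refine ⟨u, v, ?_, sub_eq_zero.mp hB⟩
    rw [hB, map_zero, zero_mul, add_zero] at key
    exact (map_eq_zero _).mp key
  · exfalso
    apply ha ((u ^ 2 + a * v ^ 2) / (2 * u * v - 1))
    apply hinj
    rw [div_pow, map_div₀, ← hg]
    have hB' : algebraMap K K⟮x⟯ (2 * u * v - 1) ≠ 0 := (_root_.map_ne_zero _).mpr hB
    rw [map_pow, map_pow, div_eq_iff (pow_ne_zero _ hB')]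
    have : algebraMap K K⟮x⟯ (u ^ 2 + a * v ^ 2) = - (algebraMap K K⟮x⟯ (2 * u * v - 1) * g) := by
      linear_combination key
    rw [this]; ring

open Polynomial IntermediateField in
lemma z8_irr_aux (m : ℕ) : ∀ (K : Type u) [Field K] (i a : K), i ^ 2 = -1 →
    (∀ b : K, b ^ 2 ≠ a) → Irreducible (X ^ (2 ^ m) - C a : K[X]) := by
  induction m with
  | zero => intro K _ i a _ _; simpa using irreducible_X_sub_C a
  | succ m ih =>
    intro K _ i a hi ha
    rw [pow_succ]
    apply X_pow_mul_sub_C_irreducible (X_pow_sub_C_irreducible_of_prime Nat.prime_two ha)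
    intro E _ _ x hx
    apply ih _ (algebraMap K _ i) _ (by rw [← map_pow, hi]; simp)
    intro b hb
    obtain ⟨u, v, h1, h2⟩ := z8_quad a ha x hx b hb
    have hv : v ≠ 0 := by rintro rfl; simp at h2
    apply ha (i * u / v)
    rw [div_pow, div_eq_iff (pow_ne_zero _ hv), mul_pow, hi]
    linear_combination -h1

open Polynomial IntermediateField in
lemma z8_irr (m : ℕ) (K : Type u) [Field K] (h1 : ∀ b : K, b ^ 2 ≠ -1)
    (h2 : ∀ b : K, b ^ 2 ≠ 2) (h3 : ∀ b : K, b ^ 2 ≠ -2) :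
    Irreducible (X ^ (2 ^ (m + 1)) - C (-1) : K[X]) := by
  rw [pow_succ]
  apply X_pow_mul_sub_C_irreducible (X_pow_sub_C_irreducible_of_prime Nat.prime_two h1)
  intro E _ _ x hx
  have hg : (AdjoinSimple.gen K x) ^ 2 = -1 := by
    have h := minpoly.aeval K (AdjoinSimple.gen K x)
    rw [minpoly_gen, hx] at h
    simpa [add_eq_zero_iff_eq_neg] using h
  apply z8_irr_aux m _ (AdjoinSimple.gen K x) _ hg
  intro b hb
  obtain ⟨u, v, e1, e2⟩ := z8_quad (-1) h1 x hx b hb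
  have hu : u ≠ 0 := by rintro rfl; simp at e2
  have : (u - v) * (u + v) = 0 := by linear_combination e1
  rcases mul_eq_zero.mp this with h | h
  · apply h2 (2 * u)
    have : v = u := by linear_combination -h
    subst this
    linear_combination 2 * e2
  · apply h3 (2 * u)
    have : v = -u := by linear_combination h
    subst this
    linear_combination -2 * e2

lemma z8_charZero (k : Type*) [Field k] (h1 : ∀ b : k, b ^ 2 ≠ -1)
    (h2 : ∀ b : k, b ^ 2 ≠ 2) (h3 : ∀ b : k, b ^ 2 ≠ -2) : CharZero k := by
  obtain ⟨p, hp⟩ := CharP.exists k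
  rcases CharP.char_is_prime_or_zero k p with hp' | rfl
  · exfalso
    have : Fact p.Prime := ⟨hp'⟩
    have g1 : ¬ IsSquare (-1 : ZMod p) := by
      rintro ⟨b, hb⟩
      apply h1 (ZMod.castHom (dvd_refl p) k b)
      rw [← map_pow, pow_two, ← hb]; simp only [map_neg, map_one]
    have g2 : ¬ IsSquare (2 : ZMod p) := by
      rintro ⟨b, hb⟩
      apply h2 (ZMod.castHom (dvd_refl p) k b)
      rw [← map_pow, pow_two, ← hb]; simp only [map_ofNat]
    have g3 : ¬ IsSquare (-2 : ZMod p) := by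
      rintro ⟨b, hb⟩
      apply h3 (ZMod.castHom (dvd_refl p) k b)
      rw [← map_pow, pow_two, ← hb]; simp only [map_neg, map_ofNat]
    rw [← quadraticChar_neg_one_iff_not_isSquare] at g1 g2 g3
    have : quadraticChar (ZMod p) (-2) = quadraticChar (ZMod p) (-1) * quadraticChar (ZMod p) 2 := by
      rw [← map_mul]; congr 1; ring
    rw [g1, g2, g3] at this
    norm_num at this
  · exact CharP.charP_to_charZero k

open Polynomial in
lemma z8_nonsq (k : Type*) [Field k] (ζ : AlgebraicClosure k) (h4 : ζ ^ 4 = -1)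
    (hd : (minpoly k ζ).natDegree = 4) :
    (∀ b : k, b ^ 2 ≠ -1) ∧ (∀ b : k, b ^ 2 ≠ 2) ∧ (∀ b : k, b ^ 2 ≠ -2) := by
  have key : ∀ s t : k, ζ ^ 2 + algebraMap k _ s * ζ + algebraMap k _ t = 0 → False := by
    intro s t h
    have hm : (X ^ 2 + C s * X + C t : k[X]).natDegree = 2 := by compute_degree!
    have h0 : (X ^ 2 + C s * X + C t : k[X]) ≠ 0 := by
      intro h; rw [h] at hm; simp at hm
    have := natDegree_le_of_dvd (minpoly.dvd k ζ (p := X ^ 2 + C s * X + C t) (by simpa using h)) h0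
    omega
  refine ⟨fun b hb => ?_, fun b hb => ?_, fun b hb => ?_⟩ <;>
    have hb' := congrArg (algebraMap k (AlgebraicClosure k)) hb <;>
    simp only [map_pow, map_neg, map_one, map_ofNat] at hb'
  · have : (ζ ^ 2 - algebraMap k _ b) * (ζ ^ 2 + algebraMap k _ b) = 0 := by
      linear_combination h4 - hb'
    rcases mul_eq_zero.mp this with h | h
    · exact key 0 (-b) (by simp only [map_neg, map_zero]; linear_combination h)
    · exact key 0 b (by simp only [map_zero]; linear_combination h)
  · have : (ζ ^ 2 + 1 - algebraMap k _ b * ζ) * (ζ ^ 2 + 1 + algebraMap k _ b * ζ) = 0 := by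
      linear_combination h4 - ζ ^ 2 * hb'
    rcases mul_eq_zero.mp this with h | h
    · exact key (-b) 1 (by simp only [map_neg, map_one]; linear_combination h)
    · exact key b 1 (by simp only [map_one]; linear_combination h)
  · have : (ζ ^ 2 - 1 - algebraMap k _ b * ζ) * (ζ ^ 2 - 1 + algebraMap k _ b * ζ) = 0 := by
      linear_combination h4 - ζ ^ 2 * hb'
    rcases mul_eq_zero.mp this with h | h
    · exact key (-b) (-1) (by simp only [map_neg, map_one]; linear_combination h)
    · exact key b (-1) (by simp only [map_neg, map_one]; linear_combination h)

open Polynomial IntermediateField in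
lemma z8_inter (k : Type u) [Field k] [CharZero k] [CharZero (AlgebraicClosure k)]
    (h1 : ∀ b : k, b ^ 2 ≠ -1)
    (h2 : ∀ b : k, b ^ 2 ≠ 2) (h3 : ∀ b : k, b ^ 2 ≠ -2) (c : k)
    (hc : algebraMap k (AlgebraicClosure k) c ∈
      Subfield.closure {x : AlgebraicClosure k | ∃ n : ℕ, x ^ (2^n) = 1}) :
    ∃ q : ℚ, (q : k) = c := by
  have hP : ∀ x ∈ Subfield.closure {x : AlgebraicClosure k | ∃ n : ℕ, x ^ (2^n) = 1},
      ∃ N : ℕ, ∀ n ≥ N, ∀ ζ : AlgebraicClosure k, IsPrimitiveRoot ζ (2 ^ n) → x ∈ ℚ⟮ζ⟯ := by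
    intro x hx
    induction hx using Subfield.closure_induction with
    | mem x hx =>
      obtain ⟨N, hN⟩ := hx
      refine ⟨N, fun n hn ζ hζ => ?_⟩
      have : x ^ (2 ^ n) = 1 := by
        obtain ⟨d, rfl⟩ := Nat.exists_eq_add_of_le hn
        rw [pow_add, pow_mul, hN, one_pow]
      obtain ⟨i, _, rfl⟩ := hζ.eq_pow_of_pow_eq_one this
      exact pow_mem (mem_adjoin_simple_self ℚ ζ) i
    | one => exact ⟨0, fun n _ ζ _ => one_mem _⟩
    | add x y _ _ hx hy =>
      obtain ⟨N, hN⟩ := hx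
      obtain ⟨M, hM⟩ := hy
      exact ⟨max N M, fun n hn ζ hζ => add_mem (hN n (le_trans (le_max_left _ _) hn) ζ hζ)
        (hM n (le_trans (le_max_right _ _) hn) ζ hζ)⟩
    | neg x _ hx =>
      obtain ⟨N, hN⟩ := hx
      exact ⟨N, fun n hn ζ hζ => neg_mem (hN n hn ζ hζ)⟩
    | inv x _ hx =>
      obtain ⟨N, hN⟩ := hx
      exact ⟨N, fun n hn ζ hζ => inv_mem (hN n hn ζ hζ)⟩
    | mul x y _ _ hx hy =>
      obtain ⟨N, hN⟩ := hx
      obtain ⟨M, hM⟩ := hy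
      exact ⟨max N M, fun n hn ζ hζ => mul_mem (hN n (le_trans (le_max_left _ _) hn) ζ hζ)
        (hM n (le_trans (le_max_right _ _) hn) ζ hζ)⟩
  obtain ⟨N, hN⟩ := hP _ hc
  have hirr := z8_irr N k h1 h2 h3
  have hdeg : (X ^ (2 ^ (N + 1)) - C (-1) : k[X]).degree ≠ 0 := by
    rw [degree_X_pow_sub_C (by positivity)]
    exact_mod_cast (by positivity : (2 ^ (N+1) : ℕ) ≠ 0)
  obtain ⟨ζ, hζ⟩ := IsAlgClosed.exists_aeval_eq_zero (AlgebraicClosure k) _ hdeg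
  have hmin : X ^ (2 ^ (N + 1)) - C (-1) = minpoly k ζ :=
    minpoly.eq_of_irreducible_of_monic hirr hζ (monic_X_pow_sub_C _ (by positivity))
  have hζ' : ζ ^ (2 ^ (N + 1)) = -1 := by
    simpa [add_eq_zero_iff_eq_neg] using hζ
  have hprim : IsPrimitiveRoot ζ (2 ^ (N + 2)) := by
    rw [IsPrimitiveRoot.iff_orderOf]
    apply orderOf_eq_prime_pow
    · rw [hζ']; norm_num
    · rw [pow_succ, pow_mul, hζ']; norm_num
  have hmem := hN (N + 2) (by omega) ζ hprim
  have hint : IsIntegral ℚ ζ := hprim.isIntegral (by positivity) |>.tower_top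
  rw [← mem_toSubalgebra, adjoin_simple_toSubalgebra_of_isAlgebraic hint.isAlgebraic,
    Algebra.adjoin_singleton_eq_range_aeval] at hmem
  obtain ⟨p, hp⟩ := hmem
  set Q : ℚ[X] := X ^ (2 ^ (N + 1)) - C (-1) with hQ
  have hQm : Q.Monic := monic_X_pow_sub_C _ (by positivity)
  have hQz : aeval ζ Q = 0 := by simp [hQ, hζ']
  have hr : aeval ζ (p %ₘ Q) = algebraMap k _ c := by
    rw [← hp]
    have h := congrArg (aeval ζ) (modByMonic_add_div p Q)
    rw [map_add, map_mul, hQz, zero_mul, add_zero] at h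
    exact h
  have hrd : (p %ₘ Q).degree < (2 ^ (N + 1) : ℕ) := by
    have := degree_modByMonic_lt p hQm
    rwa [hQ, degree_X_pow_sub_C (by positivity)] at this
  generalize p %ₘ Q = r at hr hrd
  have hz : aeval ζ (r.map (algebraMap ℚ k) - C c) = 0 := by
    simp [hr]
  have hzero : r.map (algebraMap ℚ k) - C c = 0 := by
    refine eq_zero_of_dvd_of_degree_lt (minpoly.dvd k ζ hz) ?_
    rw [← hmin, degree_X_pow_sub_C (by positivity)]
    refine lt_of_le_of_lt (degree_sub_le _ _) (max_lt (lt_of_le_of_lt degree_map_le hrd) ?_)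
    exact lt_of_le_of_lt degree_C_le (by exact_mod_cast (by positivity : (0:ℕ) < 2 ^ (N+1)))
  refine ⟨r.coeff 0, ?_⟩
  have := congrArg (fun f => coeff f 0) hzero
  simpa [sub_eq_zero] using this

/-- Let `k` be any field with a fixed algebraic closure `k̄`. Then the
following are equivalent: (i) `k̄` contains a primitive `8`-th root of unity `ζ_8` and
`[k(ζ_8) : k] = 4`; (ii) `k` has characteristic `0` and `k ∩ ℚ(μ_{2^∞}) = ℚ`, where
`ℚ(μ_{2^∞})` is the subfield of `k̄` generated (over the prime field `ℚ`) by all roots of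
unity of `2`-power order, and the intersection is taken inside `k̄` (identifying `k` with
its image and `ℚ` with the prime subfield `Set.range Rat.cast`). -/
theorem zeta8_degree_iff (k : Type*) [Field k] :
    (∃ ζ : AlgebraicClosure k, IsPrimitiveRoot ζ 8 ∧
      Module.finrank k (IntermediateField.adjoin k {ζ} :
        IntermediateField k (AlgebraicClosure k)) = 4) ↔
    (CharZero k ∧
      Set.range (algebraMap k (AlgebraicClosure k)) ∩
        (Subfield.closure {x : AlgebraicClosure k | ∃ n : ℕ, x ^ (2^n) = 1} :
          Subfield (AlgebraicClosure k))
      = Set.range (Rat.cast : ℚ → AlgebraicClosure k)) := by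
  constructor
  · rintro ⟨ζ, hζ, hd⟩
    have hint : IsIntegral k ζ := Algebra.IsIntegral.isIntegral ζ
    rw [IntermediateField.adjoin.finrank hint] at hd
    have h4 : ζ ^ 4 = -1 := by
      have h8 := hζ.pow_eq_one
      have hne : ζ ^ 4 ≠ 1 := hζ.pow_ne_one_of_pos_of_lt (by norm_num) (by norm_num)
      have : (ζ ^ 4 - 1) * (ζ ^ 4 + 1) = 0 := by linear_combination h8
      rcases mul_eq_zero.mp this with h | h
      · exact absurd (sub_eq_zero.mp h) hne
      · exact eq_neg_of_add_eq_zero_left h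
    obtain ⟨h1, h2, h3⟩ := z8_nonsq k ζ h4 hd
    have hk := z8_charZero k h1 h2 h3
    have : CharZero (AlgebraicClosure k) :=
      charZero_of_injective_algebraMap (algebraMap k (AlgebraicClosure k)).injective
    refine ⟨hk, Set.Subset.antisymm ?_ ?_⟩
    · rintro _ ⟨⟨c, rfl⟩, hc⟩
      obtain ⟨q, rfl⟩ := z8_inter k h1 h2 h3 c hc
      exact ⟨q, by simp⟩
    · rintro _ ⟨q, rfl⟩
      exact ⟨⟨q, by simp⟩, SubfieldClass.ratCast_mem _ q⟩
  · rintro ⟨hk, heq⟩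
    have : CharZero (AlgebraicClosure k) :=
      charZero_of_injective_algebraMap (algebraMap k (AlgebraicClosure k)).injective
    obtain ⟨ζ, h4⟩ : ∃ ζ : AlgebraicClosure k, ζ ^ 4 = -1 :=
      IsAlgClosed.exists_pow_nat_eq _ (by norm_num)
    have hmem : ζ ∈ Subfield.closure {x : AlgebraicClosure k | ∃ n : ℕ, x ^ (2^n) = 1} :=
      Subfield.subset_closure ⟨3, by linear_combination (ζ ^ 4 - 1) * h4⟩
    have key : ∀ (a : ℚ) (s : AlgebraicClosure k),
        s ∈ Subfield.closure {x : AlgebraicClosure k | ∃ n : ℕ, x ^ (2^n) = 1} →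
        s ^ 2 = (a : AlgebraicClosure k) → (∀ q : ℚ, q ^ 2 ≠ a) → ∀ b : k, b ^ 2 ≠ (a : k) := by
      intro a s hs hsa hq b hb
      have hb' := congrArg (algebraMap k (AlgebraicClosure k)) hb
      rw [map_pow, map_ratCast, ← hsa] at hb'
      have hbm : algebraMap k (AlgebraicClosure k) b ∈
          Subfield.closure {x : AlgebraicClosure k | ∃ n : ℕ, x ^ (2^n) = 1} := by
        rcases sq_eq_sq_iff_eq_or_eq_neg.mp hb' with h | h
        · rw [h]; exact hs
        · rw [h]; exact neg_mem hs
      have : algebraMap k (AlgebraicClosure k) b ∈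
          Set.range (Rat.cast : ℚ → AlgebraicClosure k) := heq ▸ ⟨⟨b, rfl⟩, hbm⟩
      obtain ⟨q, hqb⟩ := this
      apply hq q
      rw [← hqb, hsa] at hb'
      exact_mod_cast hb'
    have h1 : ∀ b : k, b ^ 2 ≠ -1 := by
      have := key (-1) (ζ ^ 2) (pow_mem hmem 2) (by push_cast; linear_combination h4)
        (fun q => by nlinarith [sq_nonneg q])
      simpa using this
    have h2 : ∀ b : k, b ^ 2 ≠ 2 := by
      have := key 2 (ζ - ζ ^ 3) (sub_mem hmem (pow_mem hmem 3))
        (by push_cast; linear_combination (ζ ^ 2 - 2) * h4)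
        (fun q hq => by
          have : IsSquare (2 : ℚ) := ⟨q, by rw [← hq, pow_two]⟩
          rw [Rat.isSquare_iff] at this
          obtain ⟨⟨n, hn⟩, -⟩ := this
          have hn : (2 : ℤ) = n * n := hn
          have : n < 2 := by nlinarith
          have : -2 < n := by nlinarith
          interval_cases n <;> omega)
      simpa using this
    have h3 : ∀ b : k, b ^ 2 ≠ -2 := by
      have := key (-2) (ζ + ζ ^ 3) (add_mem hmem (pow_mem hmem 3))
        (by push_cast; linear_combination (ζ ^ 2 + 2) * h4)
        (fun q => by nlinarith [sq_nonneg q])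
      simpa using this
    refine ⟨ζ, ?_, ?_⟩
    · rw [IsPrimitiveRoot.iff_orderOf]
      apply orderOf_eq_prime_pow (p := 2) (n := 2)
      · norm_num [h4]
      · norm_num; linear_combination (ζ ^ 4 - 1) * h4
    · have hint : IsIntegral k ζ := Algebra.IsIntegral.isIntegral ζ
      rw [IntermediateField.adjoin.finrank hint,
        ← minpoly.eq_of_irreducible_of_monic (z8_irr 1 k h1 h2 h3) (by simp [h4])
          (Polynomial.monic_X_pow_sub_C _ (by norm_num)), Polynomial.natDegree_X_pow_sub_C]
      norm_num
end

section
/- Let k be a field of characteristic not equal to 2 such that [k(ζ_8) : k] = 4 for a primitive 8th root of unity ζ_8 in a fixed algebraic closure, and let f(z) = z² + c ∈ k[z] with f^r(0) = 0 for a minimal integer r ≥ 1. Let K_n be the splitting field of f^n(X) − t over the rational function field k(t) inside a fixed algebraic closure of k(t), and let k̄ be the algebraic closure of k inside that closure. Then for every n ≥ 1, K_n ∩ k̄ = k(ζ_{2^e}), where e = ⌊(n−1)/r⌋ + 1 and ζ_{2^e} is a primitive 2^e-th root of unity. -/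
open Polynomial


namespace ConstField

/-- Every power series with nonzero constant coefficient is a square. -/
lemma ps_sqrt {C : Type*} [Field C] [IsAlgClosed C] (h2 : (2 : C) ≠ 0) (p : PowerSeries C)
    (hp : PowerSeries.constantCoeff p ≠ 0) : ∃ v : PowerSeries C, v ^ 2 = p := by
  obtain ⟨b, hb⟩ := IsAlgClosed.exists_pow_nat_eq (PowerSeries.constantCoeff p) (n := 2) (by norm_num)
  have hb0 : b ≠ 0 := by rintro rfl; apply hp; rw [← hb]; simp
  have : HenselianRing (PowerSeries C) (Ideal.span {PowerSeries.X}) := inferInstance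
  have := HenselianRing.is_henselian (I := Ideal.span {(PowerSeries.X : PowerSeries C)})
    (X ^ 2 - Polynomial.C p : (PowerSeries C)[X]) (monic_X_pow_sub_C p (by norm_num)) (PowerSeries.C b)
    (by
      rw [Ideal.mem_span_singleton, PowerSeries.X_dvd_iff]
      simp [hb])
    (by
      apply IsUnit.map
      rw [PowerSeries.isUnit_iff_constantCoeff]
      simp [hb0]
      rwa [one_add_one_eq_two])
  obtain ⟨a, ha, -⟩ := this
  refine ⟨a, ?_⟩
  simpa [IsRoot, sub_eq_zero] using ha

lemma ps_root {C : Type*} [Field C] [IsAlgClosed C] (h2 : (2 : C) ≠ 0) (A : ℕ) :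
    ∀ (p : PowerSeries C) (_ : PowerSeries.constantCoeff p ≠ 0),
      ∃ v : PowerSeries C, v ^ (2 ^ A) = p := by
  induction A with
  | zero => intro p _; exact ⟨p, by simp⟩
  | succ A ih =>
    intro p hp
    obtain ⟨v, hv⟩ := ps_sqrt h2 p hp
    obtain ⟨w, hw⟩ := ih v (by rintro h; apply hp; rw [← hv]; simp [h])
    exact ⟨w, by rw [pow_succ, pow_mul, hw, hv]⟩

/-- all points over a non-postcritical value are power series. -/
lemma unram {C L : Type*} [Field C] [IsAlgClosed C] [Field L] (h2 : (2 : C) ≠ 0)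
    (i : PowerSeries C →+* L) (c : C) (m : ℕ) : ∀ (τ : PowerSeries C)
    (_ : ∀ j, 1 ≤ j → j ≤ m → PowerSeries.constantCoeff τ ≠ (fun z : C => z ^ 2 + c)^[j] 0)
    (y : L) (_ : (fun z : L => z ^ 2 + i (PowerSeries.C c))^[m] y = i τ), ∃ p, i p = y := by
  induction m with
  | zero => intro τ _ y hy; exact ⟨τ, hy.symm⟩
  | succ m ih =>
    intro τ hτ y hy
    rw [Function.iterate_succ_apply'] at hy
    obtain ⟨v, hv⟩ := ps_sqrt h2 (τ - PowerSeries.C c) (by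
      have := hτ 1 le_rfl (by omega)
      simp [sub_eq_zero] at this ⊢; exact this)
    have key : ∀ w : PowerSeries C, w ^ 2 = τ - PowerSeries.C c →
        ∀ j, 1 ≤ j → j ≤ m → PowerSeries.constantCoeff w ≠ (fun z : C => z ^ 2 + c)^[j] 0 := by
      intro w hw j hj hjm h
      refine hτ (j+1) (by omega) (by omega) ?_
      rw [Function.iterate_succ_apply', ← h]
      have := congrArg PowerSeries.constantCoeff hw
      simp at this
      simp [this]
    have h3 : ((fun z : L => z ^ 2 + i (PowerSeries.C c))^[m] y) ^ 2 = (i v) ^ 2 := by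
      rw [← map_pow, hv, map_sub, ← hy]; ring
    rcases sq_eq_sq_iff_eq_or_eq_neg.mp h3 with h | h
    · exact ih v (key v hv) y h
    · rw [← map_neg] at h
      exact ih (-v) (key (-v) (by rw [neg_sq, hv])) y h

/-- injectivity on the cycle -/
lemma cyc_inj {C : Type*} [Field C] {c : C} {r : ℕ} (hr : 1 ≤ r)
    (hper : (fun z : C => z ^ 2 + c)^[r] 0 = 0) {i j : ℕ}
    (h : ((fun z : C => z ^ 2 + c)^[i] 0) ^ 2 = ((fun z : C => z ^ 2 + c)^[j] 0) ^ 2) :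
    (fun z : C => z ^ 2 + c)^[i] 0 = (fun z : C => z ^ 2 + c)^[j] 0 := by
  have h1 : ∀ i, (fun z : C => z ^ 2 + c)^[i] 0 =
      (fun z : C => z ^ 2 + c)^[r-1] (((fun z : C => z ^ 2 + c)^[i] 0)^2 + c) := by
    intro i
    conv_lhs => rw [← hper]
    rw [← Function.iterate_add_apply, show i + r = (r - 1) + (i+1) by omega,
      Function.iterate_add_apply, Function.iterate_succ_apply']
  rw [h1 i, h, ← h1 j]

lemma neg_cyc {C : Type*} [Field C] (h2 : (2 : C) ≠ 0) {c : C} {r : ℕ} (hr : 1 ≤ r)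
    (hper : (fun z : C => z ^ 2 + c)^[r] 0 = 0) {i j : ℕ}
    (h : ((fun z : C => z ^ 2 + c)^[i] 0) = - ((fun z : C => z ^ 2 + c)^[j] 0)) :
    (fun z : C => z ^ 2 + c)^[i] 0 = 0 := by
  have := cyc_inj hr hper (i := i) (j := j) (by rw [h, neg_sq])
  rw [← this] at h
  have h3 : 2 * (fun z : C => z ^ 2 + c)^[i] 0 = 0 := by linear_combination h
  exact (mul_eq_zero.mp h3).resolve_left h2

/-- points over a postcritical value, after extracting enough roots, are power series -/
lemma ram {C L : Type*} [Field C] [IsAlgClosed C] [Field L] (h2 : (2 : C) ≠ 0)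
    (i : PowerSeries C →+* L) (c : C) {r : ℕ} (hr : 1 ≤ r)
    (hper : (fun z : C => z ^ 2 + c)^[r] 0 = 0)
    (hmin : ∀ j : ℕ, 1 ≤ j → j < r → (fun z : C => z ^ 2 + c)^[j] 0 ≠ 0)
    (m : ℕ) : ∀ (l : ℕ) (_ : 1 ≤ l) (_ : l ≤ r) (τ w : PowerSeries C)
    (_ : PowerSeries.constantCoeff τ = (fun z : C => z ^ 2 + c)^[l] 0)
    (_ : τ - PowerSeries.C ((fun z : C => z ^ 2 + c)^[l] 0) = w ^ (2 ^ ((m + r - l) / r)))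
    (y : L) (_ : (fun z : L => z ^ 2 + i (PowerSeries.C c))^[m] y = i τ), ∃ p, i p = y := by
  induction m with
  | zero => intro l _ _ τ w _ _ y hy; exact ⟨τ, hy.symm⟩
  | succ m ih =>
    intro l hl hlr τ w hτ hw y hy
    rw [Function.iterate_succ_apply'] at hy
    rcases Nat.lt_or_ge 1 l with h1 | h1
    · -- non critical step
      obtain ⟨l, rfl⟩ : ∃ l', l = l' + 1 := ⟨l - 1, by omega⟩
      have hl0 := hmin l (by omega) (by omega)
      set P := (fun z : C => z ^ 2 + c)^[l] 0 with hP
      have hP1 : (fun z : C => z ^ 2 + c)^[l+1] 0 = P ^ 2 + c := by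
        rw [Function.iterate_succ_apply']
      rw [hP1] at hτ hw
      obtain ⟨v0, hv0⟩ := ps_sqrt h2 (τ - PowerSeries.C c) (by
        simp [hτ, hl0])
      have hc0 : (PowerSeries.constantCoeff v0) ^ 2 = P ^ 2 := by
        have := congrArg PowerSeries.constantCoeff hv0
        simpa [hτ] using this
      obtain ⟨v, hv, hvc⟩ : ∃ v : PowerSeries C, v ^ 2 = τ - PowerSeries.C c ∧
          PowerSeries.constantCoeff v = P := by
        rcases sq_eq_sq_iff_eq_or_eq_neg.mp hc0 with h | h
        · exact ⟨v0, hv0, h⟩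
        · exact ⟨-v0, by rw [neg_sq, hv0], by simp [h]⟩
      have h3 : ((fun z : L => z ^ 2 + i (PowerSeries.C c))^[m] y) ^ 2 = (i v) ^ 2 := by
        rw [← map_pow, hv, map_sub, ← hy]; ring
      rcases sq_eq_sq_iff_eq_or_eq_neg.mp h3 with h | h
      · have hunit : PowerSeries.constantCoeff (v + PowerSeries.C P) ≠ 0 := by
          simp only [map_add, hvc, PowerSeries.constantCoeff_C]
          rw [← two_mul]; exact mul_ne_zero h2 hl0
        have hunit' := (PowerSeries.isUnit_iff_constantCoeff (φ := v + PowerSeries.C P)).mpr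
          (isUnit_iff_ne_zero.mpr hunit)
        obtain ⟨b, hb⟩ := hunit'.exists_right_inv
        obtain ⟨d, hd⟩ := ps_root h2 ((m + r - l) / r) b (by
          rintro h0
          have := congrArg PowerSeries.constantCoeff hb
          simp [h0] at this)
        refine ih l (by omega) (by omega) v (w * d) hvc ?_ y h
        rw [show m + 1 + r - (l+1) = m + r - l by omega] at hw
        rw [mul_pow, ← hw, hd]
        have : τ = v ^ 2 + PowerSeries.C c := by rw [hv]; ring
        rw [this, map_add, map_pow]
        linear_combination (- (v - PowerSeries.C P)) * hb
      · rw [← map_neg] at h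
        refine unram h2 i c m (-v) ?_ y h
        intro j hj hjm hh
        rw [map_neg, hvc] at hh
        apply hl0
        have := neg_cyc h2 hr hper (i := j) (j := l) hh.symm
        rw [this] at hh
        simpa using hh
    · obtain rfl : l = 1 := by omega
      have he : (m + 1 + r - 1) / r = m / r + 1 := by
        rw [show m + 1 + r - 1 = m + r by omega, Nat.add_div_right _ (by omega)]
      rw [he] at hw
      have hP1 : (fun z : C => z ^ 2 + c)^[1] 0 = c := by simp
      rw [hP1] at hw hτ
      have h3 : ((fun z : L => z ^ 2 + i (PowerSeries.C c))^[m] y) ^ 2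
          = (i (w ^ 2 ^ (m / r))) ^ 2 := by
        rw [← map_pow, ← pow_mul, ← pow_succ, ← hw, map_sub, ← hy]; ring
      have hw0 : PowerSeries.constantCoeff (w ^ 2 ^ (m / r)) = 0 := by
        have := congrArg PowerSeries.constantCoeff hw
        rw [pow_succ, pow_mul] at this
        rw [map_pow] at this
        exact pow_eq_zero_iff (two_ne_zero) |>.mp (by rw [← this]; simp [hτ])
      have he2 : (m + r - r) / r = m / r := by rw [Nat.add_sub_cancel]
      rcases sq_eq_sq_iff_eq_or_eq_neg.mp h3 with h | h
      · refine ih r hr le_rfl _ w ?_ ?_ y h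
        · rw [hw0, hper]
        · rw [hper, he2]; simp
      · rw [← map_neg] at h
        obtain ⟨b, hb⟩ := IsAlgClosed.exists_pow_nat_eq (-1 : C) (n := 2 ^ (m / r)) (by positivity)
        refine ih r hr le_rfl _ (PowerSeries.C b * w) ?_ ?_ y h
        · rw [map_neg, hw0, hper, neg_zero]
        · rw [hper, he2, mul_pow, ← map_pow, hb]; simp

end ConstField


namespace ConstField

/-- local expansion at `b` -/
noncomputable def theta {C : Type*} [Field C] (b : C) : C[X] →+* PowerSeries C :=
  (Polynomial.coeToPowerSeries.ringHom).comp (taylorAlgHom b).toRingHom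

lemma theta_apply {C : Type*} [Field C] (b : C) (p : C[X]) :
    theta b p = ((taylor b p : C[X]) : PowerSeries C) := rfl

lemma theta_inj {C : Type*} [Field C] (b : C) : Function.Injective (theta b) := by
  intro p q h
  rw [theta_apply, theta_apply] at h
  exact taylor_injective b (Polynomial.coe_injective C h)

lemma embed_contra {C : Type*} [Field C] {Ω : Type*} [Field Ω]
    [Algebra (RatFunc C) Ω] [IsAlgClosure (RatFunc C) Ω] (c b : C) (m : ℕ) (τ : C[X])
    (H : ∀ y : AlgebraicClosure (FractionRing (PowerSeries C)),
      (fun z => z ^ 2 + ((algebraMap (FractionRing (PowerSeries C))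
          (AlgebraicClosure (FractionRing (PowerSeries C)))).comp
          (algebraMap (PowerSeries C) (FractionRing (PowerSeries C)))) (PowerSeries.C c))^[m] y
        = ((algebraMap (FractionRing (PowerSeries C))
          (AlgebraicClosure (FractionRing (PowerSeries C)))).comp
          (algebraMap (PowerSeries C) (FractionRing (PowerSeries C)))) (theta b τ) →
      ∃ p, ((algebraMap (FractionRing (PowerSeries C))
          (AlgebraicClosure (FractionRing (PowerSeries C)))).comp
          (algebraMap (PowerSeries C) (FractionRing (PowerSeries C)))) p = y)
    (u : Ω) (hu : u ∈ IntermediateField.adjoin (RatFunc C)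
      {y : Ω | (fun z => z ^ 2 + algebraMap (RatFunc C) Ω (RatFunc.C c))^[m] y
        = algebraMap (RatFunc C) Ω (algebraMap C[X] (RatFunc C) τ)})
    (h : C[X]) (hb : h.eval b ≠ 0)
    (hu2 : u ^ 2 = algebraMap (RatFunc C) Ω (algebraMap C[X] (RatFunc C) ((X - Polynomial.C b) * h))) :
    False := by
  set P := PowerSeries C with hPdef
  set L0 := FractionRing P with hL0
  set L := AlgebraicClosure L0 with hL
  let T0 : RatFunc C →+* L0 := IsFractionRing.lift (A := C[X]) (K := RatFunc C)
    (g := (algebraMap P L0).comp (theta b))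
    ((IsFractionRing.injective P L0).comp (theta_inj b))
  have hT0 : ∀ p : C[X], T0 (algebraMap C[X] (RatFunc C) p) = algebraMap P L0 (theta b p) := by
    intro p
    exact IsFractionRing.lift_algebraMap _ p
  letI : Algebra (RatFunc C) L := ((algebraMap L0 L).comp T0).toAlgebra
  have hmap : ∀ q : RatFunc C, algebraMap (RatFunc C) L q = algebraMap L0 L (T0 q) := fun q => rfl
  haveI : Algebra.IsAlgebraic (RatFunc C) Ω := IsAlgClosure.isAlgebraic
  let δ : Ω →ₐ[RatFunc C] L := IsAlgClosed.lift
  have hCc : (RatFunc.C c : RatFunc C) = algebraMap C[X] (RatFunc C) (Polynomial.C c) := by simp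
  have hthc : theta b (Polynomial.C c) = PowerSeries.C c := by
    rw [theta_apply, taylor_C]; simp
  have key : ∃ q : L0, algebraMap L0 L q = δ u := by
    clear hu2
    induction hu using IntermediateField.adjoin_induction with
    | mem x hx =>
      obtain ⟨p, hp⟩ := H (δ x) (by
        have hx' := congrArg δ hx
        rw [AlgHom.commutes, hmap, hT0] at hx'
        refine Eq.trans ?_ hx'
        have hsc : Function.Semiconj δ (fun z => z ^ 2 + algebraMap (RatFunc C) Ω (RatFunc.C c))
            (fun z => z ^ 2 + ((algebraMap L0 L).comp (algebraMap P L0)) (PowerSeries.C c)) := by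
          intro z
          simp only [map_add, map_pow, AlgHom.commutes]
          rw [hmap, hCc, hT0, hthc]; rfl
        exact ((hsc.iterate_right m) x).symm)
      exact ⟨_, hp⟩
    | algebraMap x => exact ⟨T0 x, by rw [AlgHom.commutes, hmap]⟩
    | add x y _ _ hx hy =>
      obtain ⟨a, ha⟩ := hx
      obtain ⟨b, hb⟩ := hy
      exact ⟨a + b, by rw [map_add, map_add, ha, hb]⟩
    | inv x _ hx =>
      obtain ⟨a, ha⟩ := hx
      exact ⟨a⁻¹, by rw [map_inv₀, map_inv₀, ha]⟩
    | mul x y _ _ hx hy =>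
      obtain ⟨a, ha⟩ := hx
      obtain ⟨b, hb⟩ := hy
      exact ⟨a * b, by rw [map_mul, map_mul, ha, hb]⟩
  obtain ⟨q, hq⟩ := key
  have h1 : q ^ 2 = algebraMap P L0 (theta b ((X - Polynomial.C b) * h)) := by
    apply (algebraMap L0 L).injective
    rw [map_pow, hq, ← map_pow, hu2, AlgHom.commutes, hmap, hT0]
  obtain ⟨x, y, hy, rfl⟩ := IsFractionRing.div_surjective (A := P) q
  have hy0 : y ≠ 0 := nonZeroDivisors.ne_zero hy
  have hy1 : algebraMap P L0 y ≠ 0 := by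
    intro h0; exact hy0 ((IsFractionRing.injective P L0) (by rw [h0, map_zero]))
  have h2 : x ^ 2 = theta b ((X - Polynomial.C b) * h) * y ^ 2 := by
    apply IsFractionRing.injective P L0
    rw [map_mul, ← h1, map_pow, map_pow, div_pow, div_mul_cancel₀ _ (pow_ne_zero 2 hy1)]
  have h3 : theta b ((X - Polynomial.C b) * h) = PowerSeries.X * theta b h := by
    rw [map_mul]; congr 1
    rw [theta_apply]; simp
  have h4 : (theta b h).order = 0 := by
    apply PowerSeries.order_zero_of_unit
    rw [PowerSeries.isUnit_iff_constantCoeff, theta_apply]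
    simp only [Polynomial.constantCoeff_coe, isUnit_iff_ne_zero]
    rwa [taylor_coeff_zero]
  rw [h3] at h2
  have h5 := congrArg PowerSeries.order h2
  rw [pow_two, pow_two, PowerSeries.order_mul, PowerSeries.order_mul, PowerSeries.order_mul,
    PowerSeries.order_mul, h4, PowerSeries.order_X] at h5
  have hyo : y.order ≠ ⊤ := by rwa [Ne, PowerSeries.order_eq_top]
  obtain ⟨ny, hny⟩ := ENat.ne_top_iff_exists.mp hyo
  have hxo : x.order ≠ ⊤ := by
    intro hx
    rw [hx, ← hny, add_zero] at h5
    have : ((1 + (ny + ny) : ℕ) : ℕ∞) = ⊤ := by push_cast; rw [← h5]; rfl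
    exact ENat.natCast_ne_top _ this
  obtain ⟨nx, hnx⟩ := ENat.ne_top_iff_exists.mp hxo
  rw [← hny, ← hnx] at h5
  have : nx + nx = 1 + 0 + (ny + ny) := by exact_mod_cast h5
  omega

lemma quad_trivial {C : Type*} [Field C] [IsAlgClosed C] (h2 : (2 : C) ≠ 0)
    {Ω : Type*} [Field Ω] [Algebra (RatFunc C) Ω] [IsAlgClosure (RatFunc C) Ω]
    (c : C) {r : ℕ} (hr : 1 ≤ r)
    (hper : (fun z : C => z ^ 2 + c)^[r] 0 = 0)
    (hmin : ∀ j : ℕ, 1 ≤ j → j < r → (fun z : C => z ^ 2 + c)^[j] 0 ≠ 0) (m : ℕ)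
    (d : ℕ) : ∀ (g : C[X]) (_ : g.natDegree ≤ d) (u : Ω)
    (_ : u ∈ IntermediateField.adjoin (RatFunc C)
      {y : Ω | (fun z => z ^ 2 + algebraMap (RatFunc C) Ω (RatFunc.C c))^[m] y
        = algebraMap (RatFunc C) Ω (algebraMap C[X] (RatFunc C) (X ^ (2 ^ (m / r))))})
    (_ : u ∈ IntermediateField.adjoin (RatFunc C)
      {y : Ω | (fun z => z ^ 2 + algebraMap (RatFunc C) Ω (RatFunc.C c))^[m] y
        = algebraMap (RatFunc C) Ω (algebraMap C[X] (RatFunc C) (- X ^ (2 ^ (m / r))))})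
    (_ : u ^ 2 = algebraMap (RatFunc C) Ω (algebraMap C[X] (RatFunc C) g)),
    ∃ q : RatFunc C, algebraMap (RatFunc C) Ω q = u := by
  induction d using Nat.strong_induction_on with
  | _ d ih =>
  intro g hg u hu1 hu2 hu
  by_cases hd : g.natDegree = 0
  · obtain ⟨a, rfl⟩ := natDegree_eq_zero.mp hd
    obtain ⟨e, he⟩ := IsAlgClosed.exists_pow_nat_eq a (n := 2) (by norm_num)
    rw [← he, map_pow, map_pow, map_pow] at hu
    rcases sq_eq_sq_iff_eq_or_eq_neg.mp hu with h | h
    · exact ⟨_, h.symm⟩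
    · exact ⟨-_, by rw [map_neg]; exact h.symm⟩
  · have hg0 : g ≠ 0 := by rintro rfl; simp at hd
    obtain ⟨b, hb⟩ := IsAlgClosed.exists_root g (by
      intro h; exact hd (natDegree_eq_of_degree_eq_some h))
    obtain ⟨h, rfl⟩ := dvd_iff_isRoot.mpr hb
    have hh0 : h ≠ 0 := by rintro rfl; simp at hg0
    by_cases hhb : h.eval b = 0
    · obtain ⟨h', rfl⟩ := dvd_iff_isRoot.mpr hhb
      have hh0' : h' ≠ 0 := by rintro rfl; simp at hg0
      have hdeg : h'.natDegree + 2 ≤ d := by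
        rw [natDegree_mul (X_sub_C_ne_zero b) hh0, natDegree_mul (X_sub_C_ne_zero b) hh0',
          natDegree_X_sub_C] at hg
        omega
      set w := algebraMap (RatFunc C) Ω (algebraMap C[X] (RatFunc C) (X - Polynomial.C b)) with hw
      have hw0 : w ≠ 0 := by
        intro h0
        rw [hw, map_eq_zero_iff _ (algebraMap (RatFunc C) Ω).injective,
          map_eq_zero_iff _ (IsFractionRing.injective C[X] (RatFunc C))] at h0
        exact X_sub_C_ne_zero b h0
      obtain ⟨q, hq⟩ := ih (d - 2) (by omega) h' (by omega) (u / w)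
        (div_mem hu1 (IntermediateField.algebraMap_mem _ _))
        (div_mem hu2 (IntermediateField.algebraMap_mem _ _)) (by
          rw [div_pow, hu, map_mul, map_mul, map_mul, map_mul, ← hw]
          field_simp)
      exact ⟨q * algebraMap C[X] (RatFunc C) (X - Polynomial.C b), by
        rw [map_mul, hq, ← hw]; field_simp⟩
    · exfalso
      by_cases hb0 : b = 0
      · refine embed_contra c b m _ ?_ u hu1 h hhb hu
        subst hb0
        intro y hy
        refine ram h2 _ c hr hper hmin m r hr le_rfl _ PowerSeries.X ?_ ?_ y hy
        · rw [theta_apply, hper]; simp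
        · rw [theta_apply, hper, Nat.add_sub_cancel]; simp
      · by_cases hc : ∀ j, 1 ≤ j → j ≤ m → b ^ (2 ^ (m / r)) ≠ (fun z : C => z ^ 2 + c)^[j] 0
        · refine embed_contra c b m _ ?_ u hu1 h hhb hu
          intro y hy
          refine unram h2 _ c m _ ?_ y hy
          intro j hj hjm
          rw [theta_apply]; simpa using hc j hj hjm
        · push Not at hc
          obtain ⟨j, -, -, hj⟩ := hc
          refine embed_contra c b m _ ?_ u hu2 h hhb hu
          intro y hy
          refine unram h2 _ c m _ ?_ y hy
          intro i hi him
          rw [theta_apply]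
          have : - b ^ (2 ^ (m / r)) ≠ (fun z : C => z ^ 2 + c)^[i] 0 := by
            intro hh
            rw [hj] at hh
            have h0 := neg_cyc h2 hr hper hh.symm
            rw [h0, ← hj] at hh
            apply hb0
            simpa using hh
          simpa using this

end ConstField


namespace ConstField

lemma inf_eq_bot_of_no_quad {D Ω : Type*} [Field D] [Field Ω] [Algebra D Ω] [IsGalois D Ω]
    (h2 : (2 : Ω) ≠ 0) (M : IntermediateField D Ω) [FiniteDimensional D M] [Normal D M]
    (hp : ∀ g : Ω ≃ₐ[D] Ω, ∃ N : ℕ, ∀ x ∈ M, (g ^ (2 ^ N)) x = x)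
    (hQ : ∀ u ∈ M, ∀ d : D, u ^ 2 = algebraMap D Ω d → ∃ d', algebraMap D Ω d' = u) :
    M = ⊥ := by
  have hG : IsGalois D M := ⟨⟩
  have hpg : IsPGroup 2 (M ≃ₐ[D] M) := by
    intro g
    obtain ⟨g', hg'⟩ := AlgEquiv.restrictNormalHom_surjective (F := D) (K₁ := M) Ω g
    obtain ⟨N, hN⟩ := hp g'
    refine ⟨N, ?_⟩
    rw [← hg', ← map_pow]
    ext x
    have := AlgEquiv.restrictNormal_commutes (g' ^ 2 ^ N) M x
    exact Eq.trans this (hN x x.2)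
  obtain ⟨N, hN⟩ := IsPGroup.iff_card.mp hpg
  rcases N with _ | N
  · rw [pow_zero] at hN
    have : Module.finrank D M = 1 := by rw [← IsGalois.card_aut_eq_finrank, hN]
    exact IntermediateField.finrank_eq_one_iff.mp this
  · exfalso
    obtain ⟨H, hH⟩ := Sylow.exists_subgroup_card_pow_prime (G := M ≃ₐ[D] M) 2 (n := N)
      (by rw [hN]; exact pow_dvd_pow _ (by omega))
    have hidx : H.index = 2 := by
      have := H.card_mul_index
      rw [hH, hN, pow_succ] at this
      exact Nat.eq_of_mul_eq_mul_left (by positivity) this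
    have hnorm := Subgroup.normal_of_index_eq_two hidx
    have hne : IntermediateField.fixedField H ≠ ⊥ := by
      intro h
      have h1 := IntermediateField.fixingSubgroup_fixedField H
      rw [h, IntermediateField.fixingSubgroup_bot] at h1
      rw [← h1] at hidx; simp at hidx
    obtain ⟨v, hv, hvn⟩ : ∃ v ∈ IntermediateField.fixedField H,
        v ∉ (⊥ : IntermediateField D M) := by
      by_contra! hcon
      exact hne (le_bot_iff.mp hcon)
    have hv' : ∀ h ∈ H, h v = v := fun h hh => hv ⟨h, hh⟩
    apply hvn
    rw [IsGalois.mem_bot_iff_fixed]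
    intro g
    by_cases hg : g ∈ H
    · exact hv' g hg
    have hg2 : g * g ∈ H := (Subgroup.mul_mem_iff_of_index_two hidx).mpr Iff.rfl
    have hHg : ∀ h ∈ H, h (g v) = g v := by
      intro h hh
      have := hv' _ (hnorm.conj_mem h hh g⁻¹)
      rw [inv_inv, AlgEquiv.mul_apply, AlgEquiv.mul_apply] at this
      have h3 := congrArg g this
      rw [← AlgEquiv.mul_apply g g⁻¹, mul_inv_cancel, AlgEquiv.one_apply] at h3
      exact h3
    have hgg : g (g v) = v := hv' _ hg2
    have hsq : ((v - g v) ^ 2) ∈ (⊥ : IntermediateField D M) := by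
      rw [IsGalois.mem_bot_iff_fixed]
      intro g'
      by_cases hg' : g' ∈ H
      · rw [map_pow, map_sub, hv' g' hg', hHg g' hg']
      · have hmem : g' * g ∈ H := by
          rw [Subgroup.mul_mem_iff_of_index_two hidx]; tauto
        have h1 : g' (g v) = v := hv' _ hmem
        have h2 : g' v = g v := by
          have := hHg _ hmem
          rwa [AlgEquiv.mul_apply, hgg] at this
        rw [map_pow, map_sub, h1, h2]; ring
    obtain ⟨d, hd⟩ := IntermediateField.mem_bot.mp hsq
    obtain ⟨d', hd'⟩ := hQ ((v - g v : M) : Ω) (v - g v : M).2 d (by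
      have := congrArg (algebraMap M Ω) hd
      rw [← IsScalarTower.algebraMap_apply] at this
      rw [this]; rfl)
    have h4 : algebraMap D M d' = v - g v := by
      apply (algebraMap M Ω).injective
      rw [← IsScalarTower.algebraMap_apply, hd']; rfl
    have h5 : g (v - g v) = v - g v := by rw [← h4, AlgEquiv.commutes]
    rw [map_sub, hgg] at h5
    have h6 : (2 : M) * (g v - v) = 0 := by linear_combination h5
    have h7 : (2 : M) ≠ 0 := by
      intro h; apply h2
      have := congrArg (algebraMap M Ω) h
      rwa [map_ofNat, map_zero] at this
    exact sub_eq_zero.mp ((mul_eq_zero.mp h6).resolve_left h7)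

lemma prod_of_inf_eq_bot {D Ω : Type*} [Field D] [Field Ω] [Algebra D Ω] [IsGalois D Ω]
    (A B : IntermediateField D Ω) [FiniteDimensional D A] [Normal D A]
    (h : A ⊓ B = ⊥) (g : Ω ≃ₐ[D] Ω) :
    ∃ a ∈ A.fixingSubgroup, ∃ b ∈ B.fixingSubgroup, a * b = g := by
  have hn : A.fixingSubgroup.Normal := by
    rw [← IntermediateField.restrictNormalHom_ker]; infer_instance
  have hop : IsOpen ((A.fixingSubgroup ⊔ B.fixingSubgroup : Subgroup (Ω ≃ₐ[D] Ω)) : Set (Ω ≃ₐ[D] Ω)) :=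
    Subgroup.isOpen_mono le_sup_left A.fixingSubgroup_isOpen
  let H : ClosedSubgroup (Ω ≃ₐ[D] Ω) :=
    ⟨A.fixingSubgroup ⊔ B.fixingSubgroup, Subgroup.isClosed_of_isOpen _ hop⟩
  have h1 := InfiniteGalois.fixingSubgroup_fixedField H
  have h2 : IntermediateField.fixedField H.1 ≤ ⊥ := by
    rw [← h]
    refine le_inf ?_ ?_
    · rw [← InfiniteGalois.fixedField_fixingSubgroup A]
      exact IntermediateField.fixedField_antitone le_sup_left
    · rw [← InfiniteGalois.fixedField_fixingSubgroup B]
      exact IntermediateField.fixedField_antitone le_sup_right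
  have h3 : H.1 = ⊤ := by
    rw [← h1]
    have : IntermediateField.fixedField (H : Subgroup (Ω ≃ₐ[D] Ω)) = ⊥ := le_bot_iff.mp h2
    rw [this, IntermediateField.fixingSubgroup_bot]
  have h4 : g ∈ A.fixingSubgroup ⊔ B.fixingSubgroup := by
    change g ∈ H.1; rw [h3]; trivial
  exact Subgroup.mem_sup_of_normal_left.mp h4

lemma preim_finite {Ω : Type*} [Field Ω] [IsAlgClosed Ω] (c : Ω) (m : ℕ) : ∀ τ : Ω,
    {y : Ω | (fun z => z ^ 2 + c)^[m] y = τ}.Finite := by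
  induction m with
  | zero => intro τ; exact (Set.finite_singleton τ).subset (fun y hy => hy)
  | succ m ih =>
    intro τ
    obtain ⟨v, hv⟩ := IsAlgClosed.exists_pow_nat_eq (τ - c) (n := 2) (by norm_num)
    refine ((ih v).union (ih (-v))).subset ?_
    intro y hy
    rw [Set.mem_ofPred_eq, Function.iterate_succ_apply'] at hy
    exact sq_eq_sq_iff_eq_or_eq_neg.mp (by rw [hv, ← hy]; ring)

lemma preim_pow {D Ω : Type*} [Field D] [Field Ω] [Algebra D Ω] (c : D) (τ : D) (g : Ω ≃ₐ[D] Ω)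
    (m : ℕ) : ∀ y : Ω, (fun z => z ^ 2 + algebraMap D Ω c)^[m] y = algebraMap D Ω τ →
      (g ^ (2 ^ m)) y = y := by
  induction m with
  | zero => intro y hy; rw [Function.iterate_zero, id] at hy; simp [hy]
  | succ m ih =>
    intro y hy
    rw [Function.iterate_succ_apply] at hy
    have h1 := ih _ hy
    have h2 : ((g ^ 2 ^ m) y) ^ 2 = y ^ 2 := by
      rw [map_add, map_pow, AlgEquiv.commutes] at h1
      exact add_right_cancel h1
    rw [pow_succ, pow_mul, pow_two, AlgEquiv.mul_apply]
    rcases sq_eq_sq_iff_eq_or_eq_neg.mp h2 with h | h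
    · rw [h, h]
    · rw [h, map_neg, h, neg_neg]

lemma preim_normal {D Ω : Type*} [Field D] [Field Ω] [Algebra D Ω] [Normal D Ω] (c : D) (τ : D)
    (m : ℕ) : Normal D (IntermediateField.adjoin D
      {y : Ω | (fun z => z ^ 2 + algebraMap D Ω c)^[m] y = algebraMap D Ω τ}) := by
  rw [IntermediateField.normal_iff_forall_map_le]
  intro σ
  rw [IntermediateField.adjoin_map]
  refine IntermediateField.adjoin.mono _ _ _ ?_
  rintro _ ⟨y, hy, rfl⟩
  have hsc : Function.Semiconj σ (fun z => z ^ 2 + algebraMap D Ω c)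
      (fun z => z ^ 2 + algebraMap D Ω c) := by
    intro z
    simp only [map_add, map_pow, AlgHom.commutes]
  have := (hsc.iterate_right m) y
  rw [Set.mem_ofPred_eq] at hy ⊢
  refine Eq.trans this.symm ?_
  rw [hy, AlgHom.commutes]

lemma geom_prod {C : Type*} [Field C] [IsAlgClosed C] [CharZero C]
    {Ω : Type*} [Field Ω] [Algebra (RatFunc C) Ω] [IsAlgClosure (RatFunc C) Ω]
    (c : C) {r : ℕ} (hr : 1 ≤ r)
    (hper : (fun z : C => z ^ 2 + c)^[r] 0 = 0)
    (hmin : ∀ j : ℕ, 1 ≤ j → j < r → (fun z : C => z ^ 2 + c)^[j] 0 ≠ 0) (m : ℕ)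
    (g : Ω ≃ₐ[RatFunc C] Ω) : ∃ a b : Ω ≃ₐ[RatFunc C] Ω, a * b = g ∧
      (∀ y, (fun z => z ^ 2 + algebraMap (RatFunc C) Ω (RatFunc.C c))^[m] y
        = (algebraMap (RatFunc C) Ω RatFunc.X) ^ (2 ^ (m / r)) → a y = y) ∧
      (∀ y, (fun z => z ^ 2 + algebraMap (RatFunc C) Ω (RatFunc.C c))^[m] y
        = - (algebraMap (RatFunc C) Ω RatFunc.X) ^ (2 ^ (m / r)) → b y = y) := by
  have hΩ : IsAlgClosed Ω := IsAlgClosure.isAlgClosed (RatFunc C)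
  have hchz : CharZero (RatFunc C) := charZero_of_injective_algebraMap
    (algebraMap C (RatFunc C)).injective
  have hgal : IsGalois (RatFunc C) Ω := inferInstance
  have hnor : Normal (RatFunc C) Ω := inferInstance
  have hinteg : ∀ y : Ω, IsIntegral (RatFunc C) y := fun y => hnor.isIntegral y
  have h2C : (2 : C) ≠ 0 := two_ne_zero
  have h2Ω : (2 : Ω) ≠ 0 := by
    rw [← map_ofNat (algebraMap (RatFunc C) Ω) 2]
    rw [Ne, map_eq_zero]; exact two_ne_zero
  set A := IntermediateField.adjoin (RatFunc C)
      {y : Ω | (fun z => z ^ 2 + algebraMap (RatFunc C) Ω (RatFunc.C c))^[m] y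
        = algebraMap (RatFunc C) Ω (algebraMap C[X] (RatFunc C) (X ^ (2 ^ (m / r))))} with hA
  set B := IntermediateField.adjoin (RatFunc C)
      {y : Ω | (fun z => z ^ 2 + algebraMap (RatFunc C) Ω (RatFunc.C c))^[m] y
        = algebraMap (RatFunc C) Ω (algebraMap C[X] (RatFunc C) (- X ^ (2 ^ (m / r))))} with hB
  have nA : Normal (RatFunc C) A := preim_normal _ _ _
  have nB : Normal (RatFunc C) B := preim_normal _ _ _
  have fA : FiniteDimensional (RatFunc C) A := by
    have := (preim_finite (algebraMap (RatFunc C) Ω (RatFunc.C c)) m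
      (algebraMap (RatFunc C) Ω (algebraMap C[X] (RatFunc C) (X ^ (2 ^ (m / r)))))).to_subtype
    exact IntermediateField.finiteDimensional_adjoin (fun x _ => hinteg x)
  have fM : FiniteDimensional (RatFunc C) (A ⊓ B : IntermediateField (RatFunc C) Ω) :=
    FiniteDimensional.of_injective (IntermediateField.inclusion (inf_le_left : A ⊓ B ≤ A)).toLinearMap
      (IntermediateField.inclusion (inf_le_left : A ⊓ B ≤ A)).injective
  have hbot : A ⊓ B = ⊥ := by
    refine inf_eq_bot_of_no_quad h2Ω (A ⊓ B) ?_ ?_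
    · intro g
      refine ⟨m, ?_⟩
      intro x hx
      have hle : A ≤ IntermediateField.fixedField (Subgroup.zpowers (g ^ 2 ^ m)) := by
        rw [hA, IntermediateField.adjoin_le_iff]
        intro y hy
        have := preim_pow _ _ g m y hy
        rintro ⟨h, hh⟩
        exact (Subgroup.zpowers_le (H := MulAction.stabilizer (Ω ≃ₐ[RatFunc C] Ω) y)).mpr this hh
      exact hle hx.1 ⟨_, Subgroup.mem_zpowers _⟩
    · intro u hu q hq
      obtain ⟨x, y, hy, rfl⟩ := IsFractionRing.div_surjective (A := C[X]) q
      have hy0 : algebraMap C[X] (RatFunc C) y ≠ 0 := by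
        rw [Ne, map_eq_zero_iff _ (IsFractionRing.injective C[X] (RatFunc C))]
        exact nonZeroDivisors.ne_zero hy
      set w := algebraMap (RatFunc C) Ω (algebraMap C[X] (RatFunc C) y) with hw
      have hw0 : w ≠ 0 := by rwa [hw, Ne, map_eq_zero]
      obtain ⟨q, hq⟩ := quad_trivial h2C c hr hper hmin m _ (x * y) le_rfl (u * w)
        (mul_mem hu.1 (IntermediateField.algebraMap_mem _ _))
        (mul_mem hu.2 (IntermediateField.algebraMap_mem _ _)) (by
          rw [mul_pow, hq, map_div₀, map_mul, map_mul, ← hw]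
          field_simp)
      exact ⟨q / algebraMap C[X] (RatFunc C) y, by rw [map_div₀, hq, ← hw]; field_simp⟩
  obtain ⟨a, ha, b, hb, hab⟩ := prod_of_inf_eq_bot A B hbot g
  rw [IntermediateField.mem_fixingSubgroup_iff] at ha hb
  refine ⟨a, b, hab, fun y hy => ha y (IntermediateField.subset_adjoin _ _ ?_),
    fun y hy => hb y (IntermediateField.subset_adjoin _ _ ?_)⟩
  · rw [Set.mem_ofPred_eq, hy]; simp
  · rw [Set.mem_ofPred_eq, hy]; simp

end ConstField


namespace ConstField

lemma rmul_apply {Ω : Type*} [Field Ω] (a b : Ω ≃+* Ω) (z : Ω) : (a * b) z = a (b z) := rfl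

lemma list_fac {Ω : Type*} [Field Ω] [IsAlgClosed Ω] (c w : Ω) (j : ℕ) : ∀ x : Ω,
    ∃ Y : List Ω, Y.length = 2 ^ j ∧ (∀ y ∈ Y, (fun z => z ^ 2 + c)^[j] y = x) ∧
      (Y.map (fun y => w - y)).prod = (fun z => z ^ 2 + c)^[j] w - x := by
  induction j with
  | zero => intro x; exact ⟨[x], by simp, by simp, by simp⟩
  | succ j ih =>
    intro x
    obtain ⟨v, hv⟩ := IsAlgClosed.exists_pow_nat_eq (x - c) (n := 2) (by norm_num)
    obtain ⟨Y1, l1, h1, p1⟩ := ih v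
    obtain ⟨Y2, l2, h2, p2⟩ := ih (-v)
    refine ⟨Y1 ++ Y2, by rw [List.length_append, l1, l2]; ring, ?_, ?_⟩
    · intro y hy
      rw [Function.iterate_succ_apply']
      rcases List.mem_append.mp hy with h | h
      · rw [h1 y h, hv]; ring
      · rw [h2 y h, neg_sq, hv]; ring
    · rw [List.map_append, List.prod_append, p1, p2, Function.iterate_succ_apply']
      linear_combination (-1 : Ω) * hv

lemma list_root {Ω : Type*} [Field Ω] (L : Subfield Ω) (c : Ω) (N : ℕ) : ∀ Y : List Ω,
    (∀ y ∈ Y, ∃ s ∈ L, s ^ N = y - c) →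
      ∃ s ∈ L, s ^ N = (-1) ^ Y.length * (Y.map (fun y => c - y)).prod := by
  intro Y
  induction Y with
  | nil => intro _; exact ⟨1, L.one_mem, by simp⟩
  | cons y Y ih =>
    intro h
    obtain ⟨s, hs, hs'⟩ := ih (fun y hy => h y (List.mem_cons_of_mem _ hy))
    obtain ⟨s1, hs1, hs1'⟩ := h y List.mem_cons_self
    refine ⟨s1 * s, L.mul_mem hs1 hs, ?_⟩
    rw [mul_pow, hs', hs1', List.map_cons, List.prod_cons, List.length_cons]
    ring

/-- the sign -/
lemma lower {Ω : Type*} [Field Ω] [IsAlgClosed Ω] (L : Subfield Ω) (c : Ω) {r : ℕ} (hr : 1 ≤ r)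
    (hper : (fun z : Ω => z ^ 2 + c)^[r] 0 = 0) (a : ℕ) : ∀ x : Ω,
    (∀ y, (fun z => z ^ 2 + c)^[r * a] y = x → y ∈ L) →
      ∃ s ∈ L, s ^ (2 ^ a) = (-(-1) ^ (2 ^ (r - 1))) * x := by
  induction a with
  | zero =>
    intro x hx
    refine ⟨(-(-1) ^ (2 ^ (r - 1))) * x,
      L.mul_mem (L.neg_mem (L.pow_mem (L.neg_mem L.one_mem) _)) (hx x (by simp)), by simp⟩
  | succ a ih =>
    intro x hx
    obtain ⟨Y, l, h, p⟩ := list_fac c c (r - 1) x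
    have hc0 : (fun z : Ω => z ^ 2 + c)^[r - 1] c = 0 := by
      have : (fun z : Ω => z ^ 2 + c)^[r - 1 + 1] 0 = 0 := by rwa [Nat.sub_add_cancel hr]
      rw [Function.iterate_succ_apply] at this
      simpa using this
    obtain ⟨s, hs, hs'⟩ := list_root L c (2 ^ (a + 1)) Y (by
      intro y hy
      obtain ⟨u, hu⟩ := IsAlgClosed.exists_pow_nat_eq (y - c) (n := 2) (by norm_num)
      obtain ⟨s, hs, hs'⟩ := ih u (by
        intro z hz
        apply hx
        rw [show r * (a + 1) = (r - 1) + 1 + r * a by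
          rw [Nat.sub_add_cancel hr]; ring, Function.iterate_add_apply, hz,
          Function.iterate_succ_apply]
        convert h y hy using 2
        rw [hu]; ring)
      refine ⟨s, hs, ?_⟩
      rw [pow_succ, pow_mul, hs', mul_pow, hu, neg_sq, ← pow_mul, mul_comm (2 ^ (r-1)) 2, pow_mul]
      simp)
    refine ⟨s, hs, ?_⟩
    rw [hs', p, l, hc0]; ring

/-- `Ω` is algebraic over `C(τ)`, with `τ` transcendental. -/
def Good (C : Type*) [Field C] {Ω : Type*} [Field Ω] [Algebra C Ω] (τ : Ω) : Prop :=
  ∃ φ : RatFunc C →+* Ω, (∀ x, φ (RatFunc.C x) = algebraMap C Ω x) ∧ φ RatFunc.X = τ ∧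
    ∀ z : Ω, ∃ p : (RatFunc C)[X], p ≠ 0 ∧ p.eval₂ φ z = 0

lemma phi_poly {C : Type*} [Field C] {Ω : Type*} [Field Ω] [Algebra C Ω]
    (φ : RatFunc C →+* Ω) (h : ∀ x, φ (RatFunc.C x) = algebraMap C Ω x) (P : C[X]) :
    φ (algebraMap C[X] (RatFunc C) P) = aeval (φ RatFunc.X) P := by
  have : φ.comp (algebraMap C[X] (RatFunc C)) = (aeval (φ RatFunc.X) : C[X] →ₐ[C] Ω).toRingHom := by
    apply Polynomial.ringHom_ext
    · intro a; simp [h]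
    · simp
  exact congrArg (fun f => f P) this

lemma Good.transc {C : Type*} [Field C] {Ω : Type*} [Field Ω] [Algebra C Ω] {τ : Ω}
    (h : Good C τ) : Transcendental C τ := by
  obtain ⟨φ, h1, rfl, h3⟩ := h
  rw [transcendental_iff_injective]
  intro p q hpq
  rw [← phi_poly φ h1, ← phi_poly φ h1] at hpq
  exact IsFractionRing.injective C[X] (RatFunc C) (φ.injective hpq)

lemma exists_phi {C : Type*} [Field C] {Ω : Type*} [Field Ω] [Algebra C Ω] {τ : Ω}
    (h : Transcendental C τ) : ∃ φ : RatFunc C →+* Ω,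
      (∀ x, φ (RatFunc.C x) = algebraMap C Ω x) ∧ φ RatFunc.X = τ := by
  have hinj : Function.Injective (aeval τ : C[X] →ₐ[C] Ω).toRingHom :=
    transcendental_iff_injective.mp h
  refine ⟨IsFractionRing.lift (A := C[X]) (K := RatFunc C) hinj, ?_, ?_⟩
  · intro x
    rw [show (RatFunc.C x : RatFunc C) = algebraMap C[X] (RatFunc C) (Polynomial.C x) by simp,
      IsFractionRing.lift_algebraMap]
    simp
  · rw [show (RatFunc.X : RatFunc C) = algebraMap C[X] (RatFunc C) Polynomial.X by simp,
      IsFractionRing.lift_algebraMap]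
    simp

lemma Good.transfer {C : Type*} [Field C] {Ω : Type*} [Field Ω] [Algebra C Ω] {τ τ' : Ω}
    (h : Good C τ) (P : C[X]) (hP : aeval τ' P = τ) : Good C τ' := by
  have ht := h.transc
  have ht' : Transcendental C τ' := by
    intro (halg : IsAlgebraic C τ')
    apply ht
    rw [← hP]
    have hle : Algebra.adjoin C {τ'} ≤ integralClosure C Ω :=
      Algebra.adjoin_le (Set.singleton_subset_iff.mpr halg.isIntegral)
    have hmem : IsIntegral C (aeval τ' P) := hle (aeval_mem_adjoin_singleton C τ')
    exact hmem.isAlgebraic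
  obtain ⟨φ, h1, h2, h3⟩ := h
  obtain ⟨φ', h1', h2'⟩ := exists_phi ht'
  obtain ⟨ψ, e1, e2⟩ := exists_phi (C := C) (Ω := RatFunc C) (τ := algebraMap C[X] (RatFunc C) P) (by
    intro halg
    apply ht
    obtain ⟨p, hp, hp0⟩ := halg
    refine ⟨p, hp, ?_⟩
    have := congrArg φ' hp0
    rw [map_zero] at this
    rw [← this, ← hP, ← h2', ← phi_poly φ' h1', Polynomial.aeval_def, Polynomial.aeval_def,
      Polynomial.hom_eval₂]
    congr 1
    ext x
    simp [h1'])
  have hcomp : φ'.comp ψ = φ := by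
    apply IsLocalization.ringHom_ext (nonZeroDivisors C[X])
    apply Polynomial.ringHom_ext
    · intro x
      have := e1 x
      simp only [RingHom.comp_apply]
      rw [show algebraMap C[X] (RatFunc C) (Polynomial.C x) = RatFunc.C x by simp, e1, h1]
      rw [RatFunc.algebraMap_eq_C, h1']
    · simp only [RingHom.comp_apply]
      rw [show algebraMap C[X] (RatFunc C) Polynomial.X = RatFunc.X by simp, e2, h2,
        phi_poly φ' h1', h2', hP]
  refine ⟨φ', h1', h2', ?_⟩
  intro z
  obtain ⟨p, hp, hz⟩ := h3 z
  refine ⟨p.map ψ, (Polynomial.map_ne_zero_iff ψ.injective).mpr hp, ?_⟩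
  rw [Polynomial.eval₂_map, hcomp, hz]

lemma good_algClosure {C : Type*} [Field C] {Ω : Type*} [Field Ω] [IsAlgClosed Ω]
    (φ : RatFunc C →+* Ω)
    (h3 : ∀ z : Ω, ∃ p : (RatFunc C)[X], p ≠ 0 ∧ p.eval₂ φ z = 0) :
    @IsAlgClosure (RatFunc C) Ω _ _ φ.toAlgebra _ := by
  let _ : Algebra (RatFunc C) Ω := φ.toAlgebra
  exact ⟨inferInstance, ⟨fun z => h3 z⟩⟩

/-- extension of an automorphism of `C` fixing `τ` -/
lemma ext_zero {C : Type*} [Field C] {Ω : Type*} [Field Ω] [IsAlgClosed Ω] [Algebra C Ω] {τ : Ω}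
    (h : Good C τ) (σ : C ≃+* C) : ∃ δ : Ω ≃+* Ω,
      (∀ x, δ (algebraMap C Ω x) = algebraMap C Ω (σ x)) ∧ δ τ = τ := by
  obtain ⟨φ, h1, h2, h3⟩ := h
  let _ : Algebra (RatFunc C) Ω := φ.toAlgebra
  have hac : IsAlgClosure (RatFunc C) Ω := good_algClosure φ h3
  have hmap : ∀ q, algebraMap (RatFunc C) Ω q = φ q := fun q => rfl
  let ρ : RatFunc C ≃+* RatFunc C := IsFractionRing.ringEquivOfRingEquiv (A := C[X]) (B := C[X])
    (Polynomial.mapEquiv σ)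
  have hρ : ∀ p : C[X], ρ (algebraMap C[X] (RatFunc C) p)
      = algebraMap C[X] (RatFunc C) (Polynomial.mapEquiv σ p) := by
    intro p
    exact IsFractionRing.ringEquivOfRingEquiv_algebraMap _ p
  refine ⟨IsAlgClosure.equivOfEquiv Ω Ω ρ, ?_, ?_⟩
  · intro x
    rw [← h1, ← hmap, IsAlgClosure.equivOfEquiv_algebraMap, hmap,
      show (RatFunc.C x : RatFunc C) = algebraMap C[X] (RatFunc C) (Polynomial.C x) by simp, hρ,
      ← h1]
    simp
  · rw [← h2, ← hmap, IsAlgClosure.equivOfEquiv_algebraMap, hmap,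
      show (RatFunc.X : RatFunc C) = algebraMap C[X] (RatFunc C) Polynomial.X by simp, hρ]
    simp [hmap]

/-- version of `geom_prod` for ring automorphisms fixing `C` and `s` -/
lemma geom_prod_ring {C : Type*} [Field C] [IsAlgClosed C] [CharZero C]
    {Ω : Type*} [Field Ω] [IsAlgClosed Ω] [Algebra C Ω] {s : Ω} (hs : Good C s)
    (c : C) {r : ℕ} (hr : 1 ≤ r)
    (hper : (fun z : C => z ^ 2 + c)^[r] 0 = 0)
    (hmin : ∀ j : ℕ, 1 ≤ j → j < r → (fun z : C => z ^ 2 + c)^[j] 0 ≠ 0) (m : ℕ)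
    (g : Ω ≃+* Ω) (hgC : ∀ x, g (algebraMap C Ω x) = algebraMap C Ω x) (hgs : g s = s) :
    ∃ a b : Ω ≃+* Ω, a * b = g ∧ (∀ x, a (algebraMap C Ω x) = algebraMap C Ω x) ∧
      (∀ y, (fun z => z ^ 2 + algebraMap C Ω c)^[m] y = s ^ (2 ^ (m / r)) → a y = y) ∧
      (∀ y, (fun z => z ^ 2 + algebraMap C Ω c)^[m] y = - s ^ (2 ^ (m / r)) → b y = y) := by
  obtain ⟨φ, h1, h2, h3⟩ := hs
  let _ : Algebra (RatFunc C) Ω := φ.toAlgebra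
  have hac : IsAlgClosure (RatFunc C) Ω := good_algClosure φ h3
  have hmap : ∀ q, algebraMap (RatFunc C) Ω q = φ q := fun q => rfl
  have hg : ∀ q, g (algebraMap (RatFunc C) Ω q) = algebraMap (RatFunc C) Ω q := by
    have : (g : Ω →+* Ω).comp φ = φ := by
      apply IsLocalization.ringHom_ext (nonZeroDivisors C[X])
      apply Polynomial.ringHom_ext
      · intro x
        simp [h1, hgC]
      · simp [h2, hgs]
    intro q
    exact congrArg (fun f => f q) this
  obtain ⟨a, b, hab, ha, hb⟩ := geom_prod (Ω := Ω) c hr hper hmin m (AlgEquiv.ofRingEquiv (f := g) hg)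
  rw [hmap, h1, hmap, h2] at ha hb
  refine ⟨a.toRingEquiv, b.toRingEquiv, ?_, ?_, ha, hb⟩
  · ext z
    exact congrArg (fun f => f z) hab
  · intro x
    rw [← h1, ← hmap]; exact a.commutes _

/-- main induction -/
lemma main_ext {C : Type*} [Field C] [IsAlgClosed C] [CharZero C]
    {Ω : Type*} [Field Ω] [IsAlgClosed Ω] [Algebra C Ω]
    (c : C) {r : ℕ} (hr : 1 ≤ r)
    (hper : (fun z : C => z ^ 2 + c)^[r] 0 = 0)
    (hmin : ∀ j : ℕ, 1 ≤ j → j < r → (fun z : C => z ^ 2 + c)^[j] 0 ≠ 0)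
    (σ : C ≃+* C) (hσc : σ c = c) (n : ℕ) : ∀ (t : Ω) (_ : Good C t)
    (_ : ∀ z : C, z ^ (2 ^ ((n - 1) / r + 1)) = 1 → σ z = z),
    ∃ δ : Ω ≃+* Ω, (∀ x, δ (algebraMap C Ω x) = algebraMap C Ω (σ x)) ∧
      ∀ y, (fun z => z ^ 2 + algebraMap C Ω c)^[n] y = t → δ y = y := by
  induction n with
  | zero =>
    intro t ht _
    obtain ⟨δ, h1, h2⟩ := ext_zero ht σ
    exact ⟨δ, h1, by rintro y rfl; exact h2⟩
  | succ m ih =>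
    intro t ht hσ
    rw [Nat.add_sub_cancel] at hσ
    set c' := algebraMap C Ω c with hc'
    have hper' : (fun z : Ω => z ^ 2 + c')^[r] 0 = 0 := by
      have hsc : Function.Semiconj (algebraMap C Ω) (fun z => z ^ 2 + c) (fun z => z ^ 2 + c') := by
        intro z; simp [hc']
      have := (hsc.iterate_right r) 0
      rw [hper, map_zero] at this
      exact this.symm
    have hσ' : ∀ z : C, z ^ (2 ^ ((m - 1) / r + 1)) = 1 → σ z = z := by
      intro z hz
      apply hσ
      have hle : (m - 1) / r + 1 ≤ m / r + 1 :=
        Nat.succ_le_succ (Nat.div_le_div_right (by omega))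
      obtain ⟨d, hd⟩ := pow_dvd_pow 2 hle
      rw [hd, pow_mul, hz, one_pow]
    obtain ⟨x, hx⟩ := IsAlgClosed.exists_pow_nat_eq (t - c') (n := 2) (by norm_num)
    have hGx : Good C x := ht.transfer (X ^ 2 + Polynomial.C c) (by simp [hx, hc'])
    have hGnx : Good C (-x) := ht.transfer (X ^ 2 + Polynomial.C c) (by simp [hx, hc'])
    obtain ⟨δA, A1, A2⟩ := ih x hGx hσ'
    obtain ⟨δB, B1, B2⟩ := ih (-x) hGnx hσ'
    have hlow : ∀ (δ : Ω ≃+* Ω) (w : Ω),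
        (∀ y, (fun z => z ^ 2 + c')^[m] y = w → δ y = y) →
        (∀ x, δ (algebraMap C Ω x) = algebraMap C Ω (σ x)) →
        ∃ s, δ s = s ∧ s ^ (2 ^ (m / r)) = (-(-1) ^ (2 ^ (r - 1))) * w := by
      intro δ w h1 h2
      obtain ⟨s, hs, hs'⟩ := lower ((δ : Ω →+* Ω).eqLocusField (RingHom.id Ω)) c' hr hper' (m / r) w (by
        intro y hy
        have hsurj : Function.Surjective (fun z : Ω => z ^ 2 + c') := by
          intro z
          obtain ⟨v, hv⟩ := IsAlgClosed.exists_pow_nat_eq (z - c') (n := 2) (by norm_num)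
          exact ⟨v, by simp [hv]⟩
        obtain ⟨y', hy'⟩ := (hsurj.iterate (m % r)) y
        have hfix : δ y' = y' := by
          apply h1
          rw [← Nat.div_add_mod m r, Function.iterate_add_apply, hy', hy]
        have hsc : Function.Semiconj δ (fun z => z ^ 2 + c') (fun z => z ^ 2 + c') := by
          intro z; simp [hc', h2, hσc]
        have := (hsc.iterate_right (m % r)) y'
        rw [hy', hfix, hy'] at this
        exact this)
      exact ⟨s, hs, hs'⟩
    obtain ⟨s, hsA, hs⟩ := hlow δA x A2 A1
    obtain ⟨s', hsB, hs'⟩ := hlow δB (-x) B2 B1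
    set ε : Ω := -(-1) ^ (2 ^ (r - 1)) with hε
    have hεε : ε = 1 ∨ ε = -1 := by
      rcases neg_one_pow_eq_or Ω (2 ^ (r - 1)) with h | h
      · right; rw [hε, h]
      · left; rw [hε, h, neg_neg]
    have hε2 : ε * ε = 1 := by rcases hεε with h | h <;> rw [h] <;> ring
    have hx0 : x ≠ 0 := by
      intro h0
      apply hGx.transc
      rw [h0]; exact isAlgebraic_zero
    have hs0 : s ≠ 0 := by
      intro h0
      rw [h0, zero_pow (by positivity)] at hs
      apply hx0
      linear_combination (-x) * hε2 - ε * hs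
    have hw : (s' / s) ^ (2 ^ (m / r + 1)) = 1 := by
      rw [pow_succ, pow_mul, div_pow, hs', hs, mul_neg, neg_div, neg_sq, div_pow, div_self]
      apply pow_ne_zero
      rw [← hs]; exact pow_ne_zero _ hs0
    obtain ⟨w, hw'⟩ : ∃ w : C, algebraMap C Ω w = s' / s := by
      have halg : IsIntegral C (s' / s) := by
        apply IsIntegral.of_pow (n := 2 ^ (m / r + 1)) (by positivity)
        rw [hw]; exact isIntegral_one
      exact minpoly.mem_range_of_degree_eq_one C (s' / s)
        (IsAlgClosed.degree_eq_one_of_irreducible C (minpoly.irreducible halg))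
    have hBs : δB s = s := by
      have h5 : δB (s' / s) = s' / s := by
        rw [← hw', B1, hσ w]
        apply (algebraMap C Ω).injective
        rw [map_pow, hw', hw, map_one]
      have hsp0 : s' ≠ 0 := by
        rintro rfl
        rw [zero_div, zero_pow (by positivity)] at hw
        exact zero_ne_one hw
      rw [map_div₀, hsB] at h5
      have h6 : δB s ≠ 0 := by simpa using hs0
      field_simp at h5
      first | exact h5.symm | exact h5
    have hGs : Good C s := hGx.transfer (Polynomial.C (-(-1) ^ (2 ^ (r - 1))) * X ^ (2 ^ (m / r))) (by
      simp only [map_mul, aeval_C, map_neg, map_pow, map_one, aeval_X]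
      rw [← hε, hs, ← mul_assoc, hε2, one_mul])
    have hxs : x = ε * s ^ (2 ^ (m / r)) := by rw [hs, ← mul_assoc, hε2, one_mul]
    -- decomposition
    obtain ⟨a, b, hab, haC, ha, hb⟩ : ∃ a b : Ω ≃+* Ω, δA * a = δB * b ∧
        (∀ x, a (algebraMap C Ω x) = algebraMap C Ω x) ∧
        (∀ y, (fun z => z ^ 2 + c')^[m] y = x → a y = y) ∧
        (∀ y, (fun z => z ^ 2 + c')^[m] y = - x → b y = y) := by
      have inv_fix : ∀ (g : Ω ≃+* Ω) (y : Ω), g y = y → g⁻¹ y = y := by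
        intro g y h
        exact (RingEquiv.symm_apply_eq g).mpr h.symm
      have hinvA : ∀ x, δA⁻¹ (algebraMap C Ω (σ x)) = algebraMap C Ω x := by
        intro x
        exact (RingEquiv.symm_apply_eq δA).mpr (A1 x).symm
      have hinvB : ∀ x, δB⁻¹ (algebraMap C Ω (σ x)) = algebraMap C Ω x := by
        intro x
        exact (RingEquiv.symm_apply_eq δB).mpr (B1 x).symm
      rcases hεε with h | h
      · obtain ⟨a, b, hab, haC, ha, hb⟩ := geom_prod_ring hGs c hr hper hmin m (δA⁻¹ * δB)
          (by intro z; rw [rmul_apply, B1, hinvA])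
          (by rw [rmul_apply, hBs, inv_fix _ _ hsA])
        rw [h, one_mul] at hxs
        rw [← hxs] at ha hb
        refine ⟨a, b⁻¹, ?_, haC, ha, fun y hy => inv_fix _ _ (hb y hy)⟩
        rw [eq_mul_inv_iff_mul_eq, mul_assoc, hab, mul_inv_cancel_left]
      · obtain ⟨b, a, hab, hbC, hb, ha⟩ := geom_prod_ring hGs c hr hper hmin m (δB⁻¹ * δA)
          (by intro z; rw [rmul_apply, A1, hinvB])
          (by rw [rmul_apply, hsA, inv_fix _ _ hBs])
        rw [h, neg_one_mul] at hxs
        have hxs' : s ^ (2 ^ (m / r)) = -x := by rw [hxs, neg_neg]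
        rw [hxs'] at ha hb
        rw [neg_neg] at ha
        have hab' : δA * a⁻¹ = δB * b := by
          rw [mul_inv_eq_iff_eq_mul, mul_assoc, hab, mul_inv_cancel_left]
        refine ⟨a⁻¹, b, hab', ?_, fun y hy => inv_fix _ _ (ha y hy), hb⟩
        intro z
        have : a⁻¹ = δA⁻¹ * (δB * b) := by rw [← hab', inv_mul_cancel_left]
        rw [this, rmul_apply, rmul_apply, hbC, B1, hinvA]
    refine ⟨δA * a, ?_, ?_⟩
    · intro z; rw [rmul_apply, haC, A1]
    · intro y hy
      rw [Function.iterate_succ_apply'] at hy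
      rcases sq_eq_sq_iff_eq_or_eq_neg.mp (show ((fun z => z ^ 2 + c')^[m] y) ^ 2 = x ^ 2 by
        rw [hx, ← hy]; ring) with h | h
      · rw [rmul_apply, ha y h, A2 y h]
      · rw [hab, rmul_apply, hb y h, B2 y h]

end ConstField


namespace ConstField

lemma charZero_of_eight {k Ω : Type*} [Field k] [Field Ω] [Algebra k Ω] (hchar : ringChar k ≠ 2)
    (ζ : Ω) (hζ : IsPrimitiveRoot ζ 8)
    (hd : Module.finrank k (IntermediateField.adjoin k {ζ} : IntermediateField k Ω) = 4) :
    CharZero k := by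
  obtain ⟨p, hp⟩ := CharP.exists k
  rcases CharP.char_is_prime_or_zero k p with hpp | rfl
  · exfalso
    have := Fact.mk hpp
    have hp2 : p ≠ 2 := by rwa [← ringChar.eq k p]
    have : CharP Ω p := charP_of_injective_algebraMap (algebraMap k Ω).injective p
    have hp8 : ζ ^ (p ^ 2) = ζ := by
      have hodd : p % 2 = 1 := hpp.eq_two_or_odd.resolve_left hp2
      have h1 : p ^ 2 % 8 = 1 := by
        have : p % 8 = 1 ∨ p % 8 = 3 ∨ p % 8 = 5 ∨ p % 8 = 7 := by omega
        rcases this with h | h | h | h <;> simp [Nat.pow_mod, h]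
      rw [← Nat.div_add_mod (p ^ 2) 8, h1, pow_add, pow_mul, hζ.pow_eq_one]; simp
    have key : ∀ a : Ω, a ^ p = a → ∃ b : k, algebraMap k Ω b = a := by
      intro a ha
      obtain ⟨z, hz⟩ := (mem_bot_iff_intCast p Ω).mp
        ((Subfield.mem_bot_iff_pow_eq_self Ω p).mpr ha)
      exact ⟨z, by rw [← hz]; simp⟩
    obtain ⟨u, hu⟩ := key (ζ + ζ ^ p) (by
      rw [add_pow_char, ← pow_mul, ← sq, hp8, add_comm])
    obtain ⟨v, hv⟩ := key (ζ * ζ ^ p) (by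
      rw [mul_pow, ← pow_mul, ← sq, hp8, mul_comm])
    have hdeg : (X ^ 2 - C u * X + C v : k[X]).natDegree = 2 := by compute_degree!
    have h0 : (X ^ 2 - C u * X + C v : k[X]) ≠ 0 := by
      intro h; rw [h] at hdeg; simp at hdeg
    have hroot : aeval ζ (X ^ 2 - C u * X + C v : k[X]) = 0 := by
      simp only [map_add, map_sub, map_mul, map_pow, aeval_X, aeval_C, hu, hv]; ring
    have hinteg : IsIntegral k ζ := by
      apply IsAlgebraic.isIntegral
      exact ⟨_, h0, hroot⟩
    rw [IntermediateField.adjoin.finrank hinteg] at hd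
    have := Polynomial.natDegree_le_of_dvd (minpoly.dvd k ζ hroot) h0
    omega
  · exact CharP.charP_to_charZero k

lemma good_base {k Ω C : Type*} [Field k] [Field Ω] [Field C] [Algebra k Ω] [Algebra k C]
    [Algebra C Ω] [IsScalarTower k C Ω] [Algebra.IsAlgebraic k C]
    [Algebra (RatFunc k) Ω] [IsScalarTower k (RatFunc k) Ω] [Algebra.IsAlgebraic (RatFunc k) Ω] :
    Good C (algebraMap (RatFunc k) Ω RatFunc.X) := by
  set t := algebraMap (RatFunc k) Ω RatFunc.X with ht
  have hk : Transcendental k t := by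
    rw [transcendental_iff_injective]
    intro P Q hPQ
    have e : ∀ P : k[X], aeval t P = algebraMap (RatFunc k) Ω (algebraMap k[X] (RatFunc k) P) := by
      intro P
      rw [ht, aeval_algebraMap_apply]
      congr 1
      simp
    rw [e, e] at hPQ
    exact IsFractionRing.injective k[X] (RatFunc k) ((algebraMap (RatFunc k) Ω).injective hPQ)
  have hC : Transcendental C t := by
    intro h
    exact hk (IsAlgebraic.restrictScalars k h)
  obtain ⟨φ, h1, h2⟩ := exists_phi hC
  obtain ⟨ψ, e1, e2⟩ := exists_phi (C := k) (Ω := RatFunc C) (τ := RatFunc.X) (by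
    intro h
    apply hC
    obtain ⟨p, hp, hp0⟩ := h
    refine ⟨p.map (algebraMap k C), (Polynomial.map_ne_zero_iff (algebraMap k C).injective).mpr hp, ?_⟩
    have := congrArg φ hp0
    rw [map_zero] at this
    rw [← this, Polynomial.aeval_def, Polynomial.aeval_def, Polynomial.hom_eval₂, eval₂_map, h2]
    congr 1
    ext x
    rw [RingHom.comp_apply, RingHom.comp_apply, IsScalarTower.algebraMap_apply k C (RatFunc C),
      RatFunc.algebraMap_eq_C, h1])
  have hcomp : φ.comp ψ = algebraMap (RatFunc k) Ω := by
    apply IsLocalization.ringHom_ext (nonZeroDivisors k[X])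
    apply Polynomial.ringHom_ext
    · intro x
      simp only [RingHom.comp_apply]
      rw [show algebraMap k[X] (RatFunc k) (Polynomial.C x) = RatFunc.C x by simp, e1,
        IsScalarTower.algebraMap_apply k C (RatFunc C), RatFunc.algebraMap_eq_C, h1,
        ← IsScalarTower.algebraMap_apply, ← RatFunc.algebraMap_eq_C,
        ← IsScalarTower.algebraMap_apply]
    · simp only [RingHom.comp_apply]
      rw [show algebraMap k[X] (RatFunc k) Polynomial.X = RatFunc.X by simp, e2, h2]
  refine ⟨φ, h1, h2, ?_⟩
  intro z
  obtain ⟨p, hp, hz⟩ := Algebra.IsAlgebraic.isAlgebraic (R := RatFunc k) z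
  refine ⟨p.map ψ, (Polynomial.map_ne_zero_iff ψ.injective).mpr hp, ?_⟩
  rw [Polynomial.eval₂_map, hcomp]; exact hz

/-- lower inclusion -/
lemma zeta_mem {Ω : Type*} [Field Ω] [IsAlgClosed Ω] [CharZero Ω] (L : Subfield Ω) (c t : Ω)
    (hc : c ∈ L) {r : ℕ} (hr : 1 ≤ r) (htc : t ≠ c)
    (hper : (fun z : Ω => z ^ 2 + c)^[r] 0 = 0) (n : ℕ) (hn : 1 ≤ n)
    (hL : ∀ y, (fun z => z ^ 2 + c)^[n] y = t → y ∈ L) (ζ : Ω)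
    (hζ : IsPrimitiveRoot ζ (2 ^ ((n - 1) / r + 1))) : ζ ∈ L := by
  obtain ⟨m, rfl⟩ := Nat.exists_eq_add_of_le' hn
  rw [Nat.add_sub_cancel] at hζ
  obtain ⟨x, hx⟩ := IsAlgClosed.exists_pow_nat_eq (t - c) (n := 2) (by norm_num)
  have hx0 : x ≠ 0 := by
    rintro rfl
    exact htc (by linear_combination -hx)
  have hlow : ∀ w : Ω, w ^ 2 = t - c →
        ∃ s ∈ L, s ^ (2 ^ (m / r)) = (-(-1) ^ (2 ^ (r - 1))) * w := by
    intro w hw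
    refine lower L c hr hper (m / r) w ?_
    intro y hy
    have hsurj : Function.Surjective (fun z : Ω => z ^ 2 + c) := by
      intro z
      obtain ⟨v, hv⟩ := IsAlgClosed.exists_pow_nat_eq (z - c) (n := 2) (by norm_num)
      exact ⟨v, by simp [hv]⟩
    obtain ⟨y', hy'⟩ := (hsurj.iterate (m % r)) y
    have hmem : y' ∈ L := by
      apply hL
      rw [Function.iterate_succ_apply', ← Nat.div_add_mod m r, Function.iterate_add_apply, hy', hy]
      simp [hw]
    rw [← hy']
    have : ∀ j, (fun z => z ^ 2 + c)^[j] y' ∈ L := by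
      intro j
      induction j with
      | zero => exact hmem
      | succ j ih =>
        rw [Function.iterate_succ_apply']
        exact L.add_mem (L.pow_mem ih 2) hc
    exact this _
  obtain ⟨s, hsL, hs⟩ := hlow x hx
  obtain ⟨s', hsL', hs'⟩ := hlow (-x) (by rw [neg_sq, hx])
  set ε : Ω := -(-1) ^ (2 ^ (r - 1)) with hε
  have hε0 : ε ≠ 0 := by simp [hε]
  have hw : (s' / s) ^ (2 ^ (m / r)) = -1 := by
    rw [div_pow, hs, hs', mul_neg, neg_div, div_self (mul_ne_zero hε0 hx0)]
  have hord : orderOf (s' / s) = 2 ^ (m / r + 1) := by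
    apply orderOf_eq_prime_pow
    · rw [hw]; norm_num
    · rw [pow_succ, pow_mul, hw]; norm_num
  have hprim : IsPrimitiveRoot (s' / s) (2 ^ (m / r + 1)) := hord ▸ IsPrimitiveRoot.orderOf _
  obtain ⟨i, _, hi⟩ := hprim.eq_pow_of_pow_eq_one hζ.pow_eq_one
  rw [← hi]
  exact L.pow_mem (L.div_mem hsL' hsL) i

end ConstField


namespace ConstField

lemma eval_F {k Ω : Type*} [Field k] [Field Ω] [Algebra k Ω] (c : k) (F : ℕ → Polynomial k)
    (hF0 : F 0 = X) (hFs : ∀ m : ℕ, F (m+1) = (X ^ 2 + C c).comp (F m)) (n : ℕ) (y : Ω) :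
    aeval y (F n) = (fun z => z ^ 2 + algebraMap k Ω c)^[n] y := by
  induction n with
  | zero => simp [hF0]
  | succ n ih =>
    rw [Function.iterate_succ_apply', ← ih, hFs, aeval_comp]
    simp

lemma upper {k Ω : Type*} [Field k] [CharZero k] [Field Ω] [IsAlgClosed Ω] [Algebra k Ω]
    [Algebra (RatFunc k) Ω] [IsScalarTower k (RatFunc k) Ω] [Algebra.IsAlgebraic (RatFunc k) Ω]
    (c : k) (r : ℕ) (hr : 1 ≤ r)
    (hper : (fun z : k => z ^ 2 + c)^[r] 0 = 0)
    (hmin : ∀ j : ℕ, 1 ≤ j → j < r → (fun z : k => z ^ 2 + c)^[j] 0 ≠ 0)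
    (n : ℕ) (ζ : Ω) (hζ : IsPrimitiveRoot ζ (2 ^ ((n-1)/r + 1))) (α : Ω)
    (hα : α ∈ IntermediateField.adjoin (RatFunc k)
      {y : Ω | (fun z => z ^ 2 + algebraMap k Ω c)^[n] y = algebraMap (RatFunc k) Ω RatFunc.X})
    (halg : IsAlgebraic k α) :
    α ∈ (IntermediateField.adjoin k {ζ} : IntermediateField k Ω) := by
  set t := algebraMap (RatFunc k) Ω RatFunc.X with ht
  let Cl := algebraicClosure k Ω
  have hIAC : IsAlgClosure k Cl := inferInstance
  have : IsAlgClosed Cl := hIAC.isAlgClosed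
  have : CharZero Cl := charZero_of_injective_algebraMap (algebraMap k Cl).injective
  have : IsGalois k Cl := ⟨⟩
  have hζalg : IsIntegral k ζ := hζ.isIntegral (by positivity) |>.tower_top
  let ζ' : Cl := ⟨ζ, (mem_algebraicClosure_iff).mpr hζalg.isAlgebraic⟩
  let α' : Cl := ⟨α, (mem_algebraicClosure_iff).mpr halg⟩
  have hsc : Function.Semiconj (algebraMap k Cl) (fun z => z ^ 2 + c)
      (fun z => z ^ 2 + algebraMap k Cl c) := by
    intro z; simp
  have hit : ∀ j, (fun z => z ^ 2 + algebraMap k Cl c)^[j] 0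
      = algebraMap k Cl ((fun z => z ^ 2 + c)^[j] 0) := by
    intro j
    have := (hsc.iterate_right j) 0
    rw [map_zero] at this
    exact this.symm
  have hG : Good Cl t := good_base (k := k) (C := Cl) (Ω := Ω)
  have hζ' : IsPrimitiveRoot ζ' (2 ^ ((n-1)/r + 1)) :=
    IsPrimitiveRoot.of_map_of_injective (f := algebraMap Cl Ω) hζ (algebraMap Cl Ω).injective
  have hmem : α' ∈ (IntermediateField.adjoin k {ζ'} : IntermediateField k Cl) := by
    rw [← InfiniteGalois.fixedField_fixingSubgroup (IntermediateField.adjoin k {ζ'}),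
      IntermediateField.mem_fixedField_iff]
    intro σ hσ
    have hσζ : σ ζ' = ζ' :=
      (IntermediateField.mem_fixingSubgroup_iff _ σ).mp hσ ζ'
        (IntermediateField.mem_adjoin_simple_self k ζ')
    obtain ⟨δ, d1, d2⟩ := main_ext (C := Cl) (Ω := Ω) (algebraMap k Cl c) hr
      (by rw [hit, hper, map_zero])
      (by
        intro j h1 h2 h3
        rw [hit] at h3
        exact hmin j h1 h2 ((map_eq_zero _).mp h3))
      σ.toRingEquiv (σ.commutes c) n t hG (by
        intro z hz
        obtain ⟨i, _, hi⟩ := hζ'.eq_pow_of_pow_eq_one hz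
        rw [← hi]
        change σ (ζ' ^ i) = ζ' ^ i
        rw [map_pow, hσζ])
    have hcc : algebraMap Cl Ω (algebraMap k Cl c) = algebraMap k Ω c := rfl
    rw [hcc] at d2
    have dk : ∀ x : k, δ (algebraMap k Ω x) = algebraMap k Ω x := by
      intro x
      have := d1 (algebraMap k Cl x)
      rw [show σ.toRingEquiv (algebraMap k Cl x) = algebraMap k Cl x from σ.commutes x] at this
      exact this
    have dt : δ t = t := by
      have hsurj : Function.Surjective (fun z : Ω => z ^ 2 + algebraMap k Ω c) := by
        intro z
        obtain ⟨v, hv⟩ := IsAlgClosed.exists_pow_nat_eq (z - algebraMap k Ω c) (n := 2) (by norm_num)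
        exact ⟨v, by simp [hv]⟩
      obtain ⟨y, hy⟩ := (hsurj.iterate n) t
      have hs : Function.Semiconj δ (fun z => z ^ 2 + algebraMap k Ω c)
          (fun z => z ^ 2 + algebraMap k Ω c) := by
        intro z; simp [dk]
      have := (hs.iterate_right n) y
      rw [hy, d2 y hy, hy] at this
      exact this
    have hrat : ∀ q, δ (algebraMap (RatFunc k) Ω q) = algebraMap (RatFunc k) Ω q := by
      have : (δ : Ω →+* Ω).comp (algebraMap (RatFunc k) Ω) = algebraMap (RatFunc k) Ω := by
        apply IsLocalization.ringHom_ext (nonZeroDivisors k[X])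
        apply Polynomial.ringHom_ext
        · intro x
          have h := dk x
          rw [IsScalarTower.algebraMap_apply k (RatFunc k) Ω, RatFunc.algebraMap_eq_C] at h
          simpa using h
        · simpa using dt
      intro q
      exact congrArg (fun f => f q) this
    have hfix : δ α = α := by
      refine IntermediateField.adjoin_induction (F := RatFunc k) (p := fun x _ => δ x = x)
        ?_ ?_ ?_ ?_ ?_ hα
      · intro x hx; exact d2 x hx
      · intro x; exact hrat x
      · intro x y _ _ hx hy; rw [map_add, hx, hy]
      · intro x _ hx; rw [map_inv₀, hx]
      · intro x y _ _ hx hy; rw [map_mul, hx, hy]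
    have h := d1 α'
    apply (algebraMap Cl Ω).injective
    rw [show σ α' = σ.toRingEquiv α' from rfl, ← h]
    exact hfix
  have h2 : algebraMap Cl Ω α' ∈
      (IntermediateField.adjoin k {ζ'} : IntermediateField k Cl).map Cl.val := ⟨α', hmem, rfl⟩
  rw [IntermediateField.adjoin_map] at h2
  simpa using h2

end ConstField

theorem constant_field_of_level (k : Type*) [Field k] (hchar : ringChar k ≠ 2) (c : k)
    (r : ℕ) (hr : 1 ≤ r)
    (hper : (fun z : k => z ^ 2 + c)^[r] 0 = 0)
    (hmin : ∀ j : ℕ, 1 ≤ j → j < r → (fun z : k => z ^ 2 + c)^[j] 0 ≠ 0)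
    (hζ8 : ∃ ζ : AlgebraicClosure (RatFunc k), IsPrimitiveRoot ζ 8 ∧
      Module.finrank k (IntermediateField.adjoin k {ζ} :
        IntermediateField k (AlgebraicClosure (RatFunc k))) = 4)
    (F : ℕ → Polynomial k)
    (hF0 : F 0 = X)
    (hFs : ∀ m : ℕ, F (m+1) = (X ^ 2 + C c).comp (F m))
    (n : ℕ) (hn : 1 ≤ n)
    (ζ : AlgebraicClosure (RatFunc k))
    (hζ : IsPrimitiveRoot ζ (2 ^ ((n-1)/r + 1))) :
    ((IntermediateField.adjoin (RatFunc k)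
        ((((F n).map (algebraMap k (RatFunc k)) - C RatFunc.X)).rootSet
          (AlgebraicClosure (RatFunc k))) :
        IntermediateField (RatFunc k) (AlgebraicClosure (RatFunc k))) :
        Set (AlgebraicClosure (RatFunc k)))
      ∩ {x : AlgebraicClosure (RatFunc k) | IsAlgebraic k x}
    = ((IntermediateField.adjoin k {ζ} :
        IntermediateField k (AlgebraicClosure (RatFunc k))) :
        Set (AlgebraicClosure (RatFunc k))) := by
  obtain ⟨ζ8, h8, h84⟩ := hζ8
  have hcz : CharZero k := ConstField.charZero_of_eight hchar ζ8 h8 h84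
  have hczΩ : CharZero (AlgebraicClosure (RatFunc k)) :=
    charZero_of_injective_algebraMap (algebraMap k (AlgebraicClosure (RatFunc k))).injective
  set t := algebraMap (RatFunc k) (AlgebraicClosure (RatFunc k)) RatFunc.X with ht
  have htr : Transcendental k t :=
    (ConstField.good_base (k := k) (C := k) (Ω := AlgebraicClosure (RatFunc k))).transc
  have hev : ∀ y : AlgebraicClosure (RatFunc k),
      aeval y ((F n).map (algebraMap k (RatFunc k)) - C RatFunc.X)
        = (fun z => z ^ 2 + algebraMap k (AlgebraicClosure (RatFunc k)) c)^[n] y - t := by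
    intro y
    rw [map_sub, aeval_map_algebraMap, ConstField.eval_F c F hF0 hFs, aeval_C]
  have hne : (F n).map (algebraMap k (RatFunc k)) - C RatFunc.X ≠ 0 := by
    intro h0
    have h := hev 0
    rw [h0, map_zero, ← ConstField.eval_F c F hF0 hFs] at h
    apply htr
    rw [← sub_eq_zero.mp h.symm, ← map_zero (algebraMap k (AlgebraicClosure (RatFunc k))),
      aeval_algebraMap_apply]
    exact isAlgebraic_algebraMap _
  have hroots : ((F n).map (algebraMap k (RatFunc k)) - C RatFunc.X).rootSet
      (AlgebraicClosure (RatFunc k)) = {y : AlgebraicClosure (RatFunc k) |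
        (fun z => z ^ 2 + algebraMap k (AlgebraicClosure (RatFunc k)) c)^[n] y = t} := by
    ext y
    rw [Polynomial.mem_rootSet_of_ne hne, hev, sub_eq_zero, Set.mem_ofPred_eq]
  rw [hroots]
  apply Set.Subset.antisymm
  · rintro α ⟨h1, h2⟩
    exact ConstField.upper c r hr hper hmin n ζ hζ α h1 h2
  · have hζalg : IsIntegral k ζ := by
      apply IsIntegral.of_pow (n := 2 ^ ((n-1)/r + 1)) (by positivity)
      rw [hζ.pow_eq_one]; exact isIntegral_one
    have hmem : ζ ∈ (IntermediateField.adjoin (RatFunc k) {y : AlgebraicClosure (RatFunc k) |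
        (fun z => z ^ 2 + algebraMap k (AlgebraicClosure (RatFunc k)) c)^[n] y = t}) := by
      refine ConstField.zeta_mem (IntermediateField.adjoin (RatFunc k)
        {y : AlgebraicClosure (RatFunc k) | (fun z => z ^ 2 +
          algebraMap k (AlgebraicClosure (RatFunc k)) c)^[n] y = t}).toSubfield
        (algebraMap k (AlgebraicClosure (RatFunc k)) c) t ?_ hr ?_ ?_ n hn ?_ ζ hζ
      · rw [IsScalarTower.algebraMap_apply k (RatFunc k) (AlgebraicClosure (RatFunc k))]
        exact IntermediateField.algebraMap_mem _ _
      · intro h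
        apply htr
        rw [h]
        exact isAlgebraic_algebraMap _
      · have hsc : Function.Semiconj (algebraMap k (AlgebraicClosure (RatFunc k)))
            (fun z => z ^ 2 + c)
            (fun z => z ^ 2 + algebraMap k (AlgebraicClosure (RatFunc k)) c) := by
          intro z; simp
        have := (hsc.iterate_right r) 0
        rw [hper, map_zero] at this
        exact this.symm
      · intro y hy
        exact IntermediateField.subset_adjoin _ _ hy
    have hle : IntermediateField.adjoin k {ζ} ≤
        (IntermediateField.adjoin (RatFunc k) {y : AlgebraicClosure (RatFunc k) |
          (fun z => z ^ 2 + algebraMap k (AlgebraicClosure (RatFunc k)) c)^[n] y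
            = t}).restrictScalars k := by
      rw [IntermediateField.adjoin_simple_le_iff]
      exact hmem
    have hle2 : IntermediateField.adjoin k {ζ} ≤
        algebraicClosure k (AlgebraicClosure (RatFunc k)) := by
      rw [IntermediateField.adjoin_simple_le_iff]
      exact mem_algebraicClosure_iff.mpr hζalg.isAlgebraic
    intro x hx
    exact ⟨hle hx, mem_algebraicClosure_iff.mp (hle2 hx)⟩
end

section
/- Let k be a field of characteristic not equal to 2 with [k(ζ_8) : k] = 4 for a primitive 8th root of unity ζ_8 in a fixed algebraic closure, and let f(z) = z² + c ∈ k[z] with f^r(0) = 0 for some integer r ≥ 1. Let K_n be the splitting field of f^n(X) − t over the rational function field k(t) inside a fixed algebraic closure of k(t), and K_∞ = ⋃_{n≥1} K_n. If A ∈ k and some element α ∈ K_∞ satisfies α² = A, then α ∈ k(ζ_8). -/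
open Polynomial

theorem aux_pow_two (s : ℤ) (hs : ∃ q, s = 8 * q + 5) (m : ℕ) :
    ∃ q : ℤ, s ^ (2 ^ (m + 1)) = 1 + 2 ^ (m + 3) * (2 * q + 1) := by
  induction m with
  | zero =>
    obtain ⟨q, rfl⟩ := hs
    exact ⟨4 * q ^ 2 + 5 * q + 1, by ring⟩
  | succ m ih =>
    obtain ⟨q, hq⟩ := ih
    refine ⟨q + 2 ^ (m + 1) * (2 * q + 1) ^ 2, ?_⟩
    rw [pow_succ 2 (m + 1), pow_mul, hq]
    ring

theorem aux_gen (s t : ℤ) (hs : ∃ q, s = 8 * q + 5) (ht : ∃ q, t = 8 * q + 1) (m : ℕ) :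
    ∃ j : ℕ, ∃ d : ℤ, t = s ^ (2 * j) + 2 ^ (m + 3) * d := by
  induction m with
  | zero =>
    obtain ⟨q, rfl⟩ := ht
    exact ⟨0, q, by ring⟩
  | succ m ih =>
    obtain ⟨j, d, hd⟩ := ih
    rcases Int.even_or_odd' d with ⟨e, rfl | rfl⟩
    · exact ⟨j, e, by rw [hd]; ring⟩
    · obtain ⟨q, hq⟩ := aux_pow_two s hs m
      have hodd : Odd (s ^ (2 * j)) := by
        obtain ⟨a, rfl⟩ := hs
        exact Odd.pow ⟨4 * a + 2, by ring⟩
      obtain ⟨b, hb⟩ := hodd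
      refine ⟨j + 2 ^ m, e - 2 * b * q - b - q, ?_⟩
      have : s ^ (2 * (j + 2 ^ m)) = s ^ (2 * j) * s ^ (2 ^ (m + 1)) := by
        rw [← pow_add]; congr 1; ring
      rw [this, hq, hd, hb]
      ring

theorem aux_galois {k L : Type*} [Field k] [Field L] [Algebra k L] [IsGalois k L]
    [FiniteDimensional k L] (m : ℕ) (z : L) (hz : IsPrimitiveRoot z (2 ^ (m + 3)))
    (htop : IntermediateField.adjoin k {z} = ⊤)
    (hdeg : (minpoly k (z ^ (2 ^ m))).natDegree = 4) (A : k) (α : L)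
    (hα : α ^ 2 = algebraMap k L A) :
    α ∈ IntermediateField.adjoin k {z ^ (2 ^ m)} := by
  set w := z ^ (2 ^ m) with hw
  have hw8 : IsPrimitiveRoot w 8 := by
    refine hz.pow (by positivity) ?_
    ring
  have hint : IsIntegral k w := Algebra.IsIntegral.isIntegral w
  have hw4 : w ^ 4 = -1 := by
    have h1 : (w ^ 4) ^ 2 = 1 := by rw [← pow_mul]; exact hw8.pow_eq_one
    rcases (sq_eq_sq_iff_eq_or_eq_neg.mp (h1.trans (one_pow 2).symm)) with h | h
    · exact absurd h (hw8.pow_ne_one_of_pos_of_lt (by norm_num) (by norm_num))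
    · exact h
  have hmin : minpoly k w = X ^ 4 + 1 := by
    have hmon : (X ^ 4 + 1 : k[X]).Monic := by
      simpa using monic_X_pow_add_C (1 : k) (n := 4) (by norm_num)
    have hnd : (X ^ 4 + 1 : k[X]).natDegree = 4 := by
      simpa using natDegree_X_pow_add_C (r := (1 : k)) (n := 4)
    refine (Polynomial.eq_of_monic_of_dvd_of_natDegree_le (minpoly.monic hint) hmon ?_ ?_).symm
    · exact minpoly.dvd k w (by simp [hw4])
    · rw [hnd, hdeg]
  obtain ⟨σ, hσ⟩ := minpoly.exists_algEquiv_of_root' (K := k) (x := w ^ 5) (y := w)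
    (Algebra.IsAlgebraic.isAlgebraic _) (by
      rw [hmin]
      have : w ^ 5 = - w := by rw [pow_succ, hw4]; ring
      rw [map_add, map_pow, aeval_X, map_one, this, Even.neg_pow (by decide), hw4]; ring) 
  have hpow : ∀ τ : L ≃ₐ[k] L, ∃ t : ℕ, τ z = z ^ t := by
    intro τ
    obtain ⟨i, -, hi⟩ := hz.eq_pow_of_pow_eq_one (ξ := τ z)
      (by rw [← map_pow, hz.pow_eq_one, map_one])
    exact ⟨i, hi.symm⟩
  have hpw : ∀ (τ : L ≃ₐ[k] L) (t : ℕ), τ z = z ^ t → τ w = w ^ t := by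
    intro τ t h
    rw [hw, map_pow, h, ← pow_mul, ← pow_mul, mul_comm]
  have hmod : ∀ a b : ℕ, w ^ a = w ^ b → a ≡ b [MOD 8] := by
    intro a b h
    rw [pow_eq_pow_mod a hw8.pow_eq_one, pow_eq_pow_mod b hw8.pow_eq_one] at h
    exact hw8.pow_inj (Nat.mod_lt _ (by norm_num)) (Nat.mod_lt _ (by norm_num)) h
  obtain ⟨s, hs⟩ := hpow σ
  have hs5 : s ≡ 5 [MOD 8] := hmod _ _ (by rw [← hpw σ s hs, hσ])
  have hσα : σ (σ α) = α := by
    have h : (σ α) ^ 2 = α ^ 2 := by rw [← map_pow, hα, AlgEquiv.commutes]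
    rcases sq_eq_sq_iff_eq_or_eq_neg.mp h with h | h
    · rw [h, h]
    · rw [h, map_neg, h, neg_neg]
  have hσj : ∀ j : ℕ, ((σ ^ 2) ^ j) α = α := by
    intro j
    induction j with
    | zero => simp
    | succ j ih => rw [pow_succ', AlgEquiv.mul_apply, ih, pow_two, AlgEquiv.mul_apply, hσα]
  have hσn : ∀ n : ℕ, (σ ^ n) z = z ^ (s ^ n) := by
    intro n
    induction n with
    | zero => simp
    | succ n ih => rw [pow_succ', AlgEquiv.mul_apply, ih, map_pow, hs, ← pow_mul, pow_succ']
  rw [← IsGalois.fixedField_fixingSubgroup (IntermediateField.adjoin k {w}),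
    IntermediateField.mem_fixedField_iff]
  intro τ hτ
  rw [IntermediateField.mem_fixingSubgroup_iff] at hτ
  have hτw : τ w = w := hτ w (IntermediateField.mem_adjoin_simple_self k w)
  obtain ⟨t, ht⟩ := hpow τ
  have ht1 : t ≡ 1 [MOD 8] := hmod _ _ (by rw [← hpw τ t ht, hτw, pow_one])
  have hs5' : ∃ q : ℤ, (s : ℤ) = 8 * q + 5 := ⟨(s : ℤ) / 8, by
    have : s % 8 = 5 := hs5
    omega⟩
  have ht1' : ∃ q : ℤ, (t : ℤ) = 8 * q + 1 := ⟨(t : ℤ) / 8, by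
    have : t % 8 = 1 := ht1
    omega⟩
  obtain ⟨j, d, hd⟩ := aux_gen s t hs5' ht1' m
  have hmod2 : s ^ (2 * j) ≡ t [MOD 2 ^ (m + 3)] := by
    rw [Nat.modEq_iff_dvd]
    refine ⟨d, ?_⟩
    rw [hd]
    push_cast
    ring
  have hτz : τ z = ((σ ^ 2) ^ j) z := by
    rw [ht, ← pow_mul, hσn]
    rw [pow_eq_pow_mod t hz.pow_eq_one, pow_eq_pow_mod (s ^ (2 * j)) hz.pow_eq_one]
    exact congrArg (fun n => z ^ n) hmod2.symm
  have hτσ : τ = (σ ^ 2) ^ j := by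
    apply AlgEquiv.ext
    intro x
    have hx : x ∈ IntermediateField.adjoin k {z} := by rw [htop]; trivial
    induction hx using IntermediateField.adjoin_induction with
    | mem x hx =>
      rw [Set.mem_singleton_iff.mp hx]
      exact hτz
    | algebraMap x => rw [AlgEquiv.commutes, AlgEquiv.commutes]
    | add x y _ _ hx hy => rw [map_add, map_add, hx, hy]
    | inv x _ hx => rw [map_inv₀, map_inv₀, hx]
    | mul x y _ _ hx hy => rw [map_mul, map_mul, hx, hy]
  rw [hτσ, hσj]


noncomputable def sqrtCoeff {E : Type*} [Field E] (b : E) (g : ℕ → E) : ℕ → E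
  | 0 => b
  | n + 1 => (g (n + 1) - ∑ i : Fin n, sqrtCoeff b g (i + 1) * sqrtCoeff b g (n - i)) / (2 * b)
termination_by n => n
decreasing_by all_goals omega

theorem exists_sqrt {E : Type*} [Field E] (h2 : (2 : E) ≠ 0) (b : E) (hb : b ≠ 0)
    (g : PowerSeries E) (hg : PowerSeries.constantCoeff g = b ^ 2) :
    ∃ h : PowerSeries E, h ^ 2 = g ∧ PowerSeries.constantCoeff h = b := by
  refine ⟨PowerSeries.mk (sqrtCoeff b (fun n => PowerSeries.coeff n g)), ?_, ?_⟩
  · ext n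
    rw [pow_two, PowerSeries.coeff_mul]
    cases n with
    | zero => simp [sqrtCoeff, hg, pow_two]
    | succ n =>
      rw [Finset.Nat.sum_antidiagonal_eq_sum_range_succ_mk, Finset.sum_range_succ,
        Finset.sum_range_succ']
      simp only [PowerSeries.coeff_mk, Nat.sub_self, Nat.sub_zero, Nat.succ_sub_succ]
      have h1 : sqrtCoeff b (fun n => PowerSeries.coeff n g) (n + 1) * (2 * b) =
          PowerSeries.coeff (n + 1) g - ∑ i ∈ Finset.range n,
            sqrtCoeff b (fun n => PowerSeries.coeff n g) (i + 1) *
            sqrtCoeff b (fun n => PowerSeries.coeff n g) (n - i) := by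
        rw [sqrtCoeff, div_mul_cancel₀ _ (by positivity), Finset.sum_range]
      have h0 : sqrtCoeff b (fun n => PowerSeries.coeff n g) 0 = b := by rw [sqrtCoeff]
      rw [h0]
      linear_combination h1
  · simp [sqrtCoeff]

section
variable {k E : Type*} [Field k] [Field E] [Algebra k E]

/-- `y` has leading term `a u^(-2^m)`. -/
def Lead {E : Type*} [Field E] (m : ℕ) (a : E) (y : FractionRing (PowerSeries E)) : Prop :=
  ∃ g : PowerSeries E, PowerSeries.constantCoeff g = a ∧
    y * algebraMap (PowerSeries E) (FractionRing (PowerSeries E)) PowerSeries.X ^ (2 ^ m)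
      = algebraMap _ _ g

noncomputable def iotaE (E : Type*) [Field E] : E →+* FractionRing (PowerSeries E) :=
  (algebraMap (PowerSeries E) (FractionRing (PowerSeries E))).comp PowerSeries.C

theorem uNe (E : Type*) [Field E] :
    algebraMap (PowerSeries E) (FractionRing (PowerSeries E)) PowerSeries.X ≠ 0 := by
  rw [Ne, IsFractionRing.to_map_eq_zero_iff]
  exact PowerSeries.X_ne_zero

theorem Lead.add_const {E : Type*} [Field E] {m : ℕ} {a : E} {y : FractionRing (PowerSeries E)}
    (h : Lead m a y) (c : E) : Lead m a (y + iotaE E c) := by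
  obtain ⟨g, hg, hy⟩ := h
  refine ⟨g + PowerSeries.C c * PowerSeries.X ^ (2 ^ m), ?_, ?_⟩
  · simp [hg]
  · rw [add_mul, hy]; simp [iotaE]

theorem Lead.sq {E : Type*} [Field E] {m : ℕ} {a : E} {y : FractionRing (PowerSeries E)}
    (h : Lead m a y) : Lead (m + 1) (a ^ 2) (y ^ 2) := by
  obtain ⟨g, hg, hy⟩ := h
  refine ⟨g ^ 2, by simp [hg], ?_⟩
  rw [map_pow, ← hy]; ring

theorem Lead.neg {E : Type*} [Field E] {m : ℕ} {a : E} {y : FractionRing (PowerSeries E)}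
    (h : Lead m a y) : Lead m (-a) (-y) := by
  obtain ⟨g, hg, hy⟩ := h
  refine ⟨-g, by simp [hg], ?_⟩
  rw [map_neg, ← hy]; ring

theorem Lead.sqrt {E : Type*} [Field E] (h2 : (2 : E) ≠ 0) {m : ℕ} {b : E} (hb : b ≠ 0)
    {y : FractionRing (PowerSeries E)}
    (h : Lead (m + 1) (b ^ 2) y) : ∃ s, s ^ 2 = y ∧ Lead m b s := by
  obtain ⟨g, hg, hy⟩ := h
  obtain ⟨h, hh, hhb⟩ := exists_sqrt h2 b hb g hg
  have hu := uNe E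
  refine ⟨algebraMap _ _ h / algebraMap (PowerSeries E) (FractionRing (PowerSeries E)) PowerSeries.X ^ (2 ^ m), ?_, h, hhb, ?_⟩
  · rw [div_pow, ← map_pow, hh, ← hy]
    field_simp
    ring
  · field_simp

theorem splits_lead (h2 : (2 : E) ≠ 0) (N : ℕ) (z : E) (hz : IsPrimitiveRoot z (2 ^ N))
    (c : k) (F : ℕ → Polynomial k) (hF0 : F 0 = X)
    (hFs : ∀ m : ℕ, F (m+1) = (X ^ 2 + C c).comp (F m)) (m : ℕ) :
    ∀ (hm : m ≤ N) (a : E) (ha : a ^ (2 ^ (N - m)) = 1) (y : FractionRing (PowerSeries E))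
      (hy : Lead m a y),
      ((F m).map ((iotaE E).comp (algebraMap k E)) - C y).Splits := by
  induction m with
  | zero =>
    intro hm a ha y hy
    rw [hF0, Polynomial.map_X]
    exact Splits.X_sub_C y
  | succ m ih =>
    intro hm a ha y hy
    obtain ⟨n, rfl⟩ := Nat.exists_eq_add_of_le hm
    have hz' : IsPrimitiveRoot (z ^ (2 ^ (m + 1))) (2 ^ n) :=
      hz.pow (by positivity) (by rw [pow_add])
    rw [Nat.add_sub_cancel_left] at ha
    obtain ⟨i, -, hi⟩ := hz'.eq_pow_of_pow_eq_one ha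
    set b : E := (z ^ (2 ^ m)) ^ i with hbdef
    have hba : b ^ 2 = a := by rw [← hi, hbdef]; ring
    have hb1 : b ^ (2 ^ (n + 1)) = 1 := by
      rw [pow_succ', pow_mul, hba, ha]
    have hb0 : b ≠ 0 := by
      rintro h
      rw [h, zero_pow (by positivity)] at hb1
      exact zero_ne_one hb1
    have hsub : m + 1 + n - m = n + 1 := by omega
    rw [hsub] at ih
    have hyc := hy.add_const (algebraMap k E (-c))
    rw [← hba] at hyc
    obtain ⟨s, hs, hsl⟩ := hyc.sqrt h2 hb0
    have h1 := ih (by omega) b hb1 s hsl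
    have h2 := ih (by omega) (-b) (by rw [pow_succ', pow_mul, neg_sq, ← pow_mul, ← pow_succ', hb1])
      (-s) hsl.neg
    convert! h1.mul h2 using 1
    rw [hFs]
    have hy' : y = s ^ 2 + ((iotaE E).comp (algebraMap k E)) c := by
      rw [hs]; simp
    rw [hy', Polynomial.map_comp]
    simp only [Polynomial.map_add, Polynomial.map_pow, Polynomial.map_X, Polynomial.map_C,
      add_comp, pow_comp, X_comp, C_comp, map_add, map_pow, map_neg]
    ring

theorem lead_start (c : k) (F : ℕ → Polynomial k) (hF0 : F 0 = X)
    (hFs : ∀ m : ℕ, F (m+1) = (X ^ 2 + C c).comp (F m)) (m : ℕ) :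
    Lead m (1 : E) ((F m).eval₂ ((iotaE E).comp (algebraMap k E))
      (algebraMap (PowerSeries E) (FractionRing (PowerSeries E)) PowerSeries.X)⁻¹) := by
  induction m with
  | zero =>
    refine ⟨1, by simp, ?_⟩
    rw [hF0]
    have := uNe E
    simp [this]
  | succ m ih =>
    have := (ih.sq).add_const (algebraMap k E c)
    rw [one_pow] at this
    rw [hFs, eval₂_comp]
    simpa using this

/-- Elements of the fraction field that are integral over constants are power series. -/
theorem int_const (y : FractionRing (PowerSeries E)) (p : k[X]) (hp : p ≠ 0)
    (h : p.eval₂ ((iotaE E).comp (algebraMap k E)) y = 0) :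
    ∃ g, algebraMap (PowerSeries E) _ g = y := by
  rw [← IsIntegrallyClosed.isIntegral_iff]
  refine ⟨(p * C (p.leadingCoeff)⁻¹).map (PowerSeries.C.comp (algebraMap k E)), 
    (monic_mul_leadingCoeff_inv hp).map _, ?_⟩
  rw [eval₂_map, eval₂_mul]
  change eval₂ ((iotaE E).comp (algebraMap k E)) y p * _ = 0
  rw [h, zero_mul]

theorem lead_transc (m : ℕ) (y : FractionRing (PowerSeries E)) (hy : Lead m (1 : E) y) (p : k[X])
    (h : p.eval₂ ((iotaE E).comp (algebraMap k E)) y = 0) : p = 0 := by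
  by_contra hp
  obtain ⟨g, rfl⟩ := int_const y p hp h
  obtain ⟨g', hg', h'⟩ := hy
  rw [← map_pow, ← map_mul] at h'
  have := IsFractionRing.injective _ _ h'
  rw [← this] at hg'
  simp at hg'

theorem aux_embed {K Ω M : Type*} [Field K] [Field Ω] [Algebra K Ω] [IsAlgClosed Ω] [Field M]
    (j : K →+* M) (P : K[X]) (hP : (P.map j).Splits) :
    ∀ (α : Ω) (_ : α ∈ IntermediateField.adjoin K (P.rootSet Ω)) (a : K)
      (_ : α ^ 2 = algebraMap K Ω a), ∃ β : M, β ^ 2 = j a := by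
  intro α hα a ha
  let _ := j.toAlgebra
  have := IntermediateField.adjoin_rootSet_isSplittingField (K := K) (L := Ω) (p := P)
    (IsAlgClosed.splits _)
  let φ := IsSplittingField.lift (F := M) (IntermediateField.adjoin K (P.rootSet Ω)) P hP
  have h : (⟨α, hα⟩ : IntermediateField.adjoin K (P.rootSet Ω)) ^ 2 = algebraMap K _ a :=
    Subtype.ext ha
  exact ⟨φ ⟨α, hα⟩, by rw [← map_pow, h]; exact φ.commutes a⟩

theorem aux_square (h2 : (2 : E) ≠ 0) (N : ℕ) (z : E) (hz : IsPrimitiveRoot z (2 ^ N))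
    (c : k) (F : ℕ → Polynomial k) (hF0 : F 0 = X)
    (hFs : ∀ m : ℕ, F (m+1) = (X ^ 2 + C c).comp (F m))
    (A : k) (α : AlgebraicClosure (RatFunc k))
    (hα : α ∈ IntermediateField.adjoin (RatFunc k)
        ((((F N).map (algebraMap k (RatFunc k)) - C RatFunc.X)).rootSet
          (AlgebraicClosure (RatFunc k))))
    (hsq : α ^ 2 = algebraMap k (AlgebraicClosure (RatFunc k)) A) :
    ∃ b : E, b ^ 2 = algebraMap k E A := by
  set y := ((F N).eval₂ ((iotaE E).comp (algebraMap k E))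
      (algebraMap (PowerSeries E) (FractionRing (PowerSeries E)) PowerSeries.X)⁻¹) with hydef
  have hy : Lead N (1 : E) y := lead_start c F hF0 hFs N
  let ψ : k[X] →+* FractionRing (PowerSeries E) :=
    eval₂RingHom ((iotaE E).comp (algebraMap k E)) y
  have hψ : Function.Injective ψ := by
    rw [injective_iff_map_eq_zero]
    intro p hp
    exact lead_transc N y hy p hp
  let j : RatFunc k →+* FractionRing (PowerSeries E) := IsFractionRing.lift (A := k[X]) hψ
  have hjp : ∀ p : k[X], j (algebraMap k[X] (RatFunc k) p) = ψ p :=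
    fun p => IsFractionRing.lift_algebraMap hψ p
  have hjX : j RatFunc.X = y := by
    rw [← RatFunc.algebraMap_X, hjp]; simp [ψ]
  have hjC : j.comp (algebraMap k (RatFunc k)) = (iotaE E).comp (algebraMap k E) := by
    ext x
    rw [RingHom.comp_apply, IsScalarTower.algebraMap_apply k k[X] (RatFunc k), hjp]
    simp [ψ]
  have hs := splits_lead (E := E) h2 N z hz c F hF0 hFs N le_rfl 1 (by simp) y hy
  obtain ⟨β, hβ⟩ := aux_embed (Ω := AlgebraicClosure (RatFunc k)) j
    ((F N).map (algebraMap k (RatFunc k)) - C RatFunc.X) (by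
      rw [Polynomial.map_sub, Polynomial.map_map, Polynomial.map_C, hjX, hjC]
      exact hs) α hα (algebraMap k (RatFunc k) A) (by
      rw [hsq, IsScalarTower.algebraMap_apply k (RatFunc k) (AlgebraicClosure (RatFunc k))])
  have hsq' : β ^ 2 = iotaE E (algebraMap k E A) := by
    rw [hβ]
    exact congrArg (fun f => f A) hjC
  obtain ⟨g, hg⟩ := int_const (k := k) β (X ^ 2 - C A)
    (X_pow_sub_C_ne_zero (by norm_num) A) (by
      rw [eval₂_sub, eval₂_X_pow, eval₂_C, hsq']; simp)
  rw [← hg, ← map_pow] at hsq'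
  have := IsFractionRing.injective _ _ hsq'
  refine ⟨PowerSeries.constantCoeff g, ?_⟩
  rw [← map_pow, this]
  simp
end

theorem aux_direct (k : Type*) [Field k] (c : k) (F : ℕ → Polynomial k)
    (hF0 : F 0 = X) (hFs : ∀ m : ℕ, F (m+1) = (X ^ 2 + C c).comp (F m)) :
    Monotone (fun n : ℕ => (IntermediateField.adjoin (RatFunc k)
        ((((F (n+1)).map (algebraMap k (RatFunc k)) - C RatFunc.X)).rootSet
          (AlgebraicClosure (RatFunc k))) :
        IntermediateField (RatFunc k) (AlgebraicClosure (RatFunc k)))) := by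
  have hcomm : ∀ m, F (m + 1) = (F m).comp (X ^ 2 + C c) := by
    intro m
    induction m with
    | zero => rw [hFs, hF0]; simp
    | succ m ih => rw [hFs (m + 1), ih, ← comp_assoc, ← hFs m, ih]
  have hdegF : ∀ m, (F m).natDegree = 2 ^ m := by
    intro m
    induction m with
    | zero => simp [hF0]
    | succ m ih => rw [hFs, natDegree_comp, ih, natDegree_X_pow_add_C, pow_succ']
  have hne : ∀ m, (F m).map (algebraMap k (RatFunc k)) - C RatFunc.X ≠ 0 := by
    intro m h
    have h1 := congrArg natDegree h
    rw [natDegree_sub_C, natDegree_map, hdegF] at h1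
    simp at h1
  have hroot : ∀ m (x : AlgebraicClosure (RatFunc k)),
      x ∈ ((F m).map (algebraMap k (RatFunc k)) - C RatFunc.X).rootSet
          (AlgebraicClosure (RatFunc k)) ↔
        aeval x (F m) = algebraMap (RatFunc k) _ RatFunc.X := by
    intro m x
    rw [mem_rootSet_of_ne (hne m), map_sub, aeval_map_algebraMap, aeval_C, sub_eq_zero]
  refine monotone_nat_of_le_succ fun n => ?_
  rw [IntermediateField.adjoin_le_iff]
  intro y hy
  rw [hroot] at hy
  obtain ⟨x, hx⟩ := IsAlgClosed.exists_pow_nat_eq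
    (y - algebraMap k (AlgebraicClosure (RatFunc k)) c) (n := 2) (by norm_num)
  have hxy : y = x ^ 2 + algebraMap (RatFunc k) (AlgebraicClosure (RatFunc k))
      (algebraMap k (RatFunc k) c) := by
    rw [hx, ← IsScalarTower.algebraMap_apply]; ring
  have hxr : x ∈ IntermediateField.adjoin (RatFunc k)
        ((((F (n+1+1)).map (algebraMap k (RatFunc k)) - C RatFunc.X)).rootSet
          (AlgebraicClosure (RatFunc k))) := by
    apply IntermediateField.subset_adjoin
    rw [hroot, hcomm, aeval_comp]
    have : aeval x (X ^ 2 + C c : k[X]) = y := by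
      rw [map_add, map_pow, aeval_X, aeval_C, hx]; ring
    rw [this, hy]
  rw [SetLike.mem_coe, hxy]
  exact add_mem (pow_mem hxr 2) (IntermediateField.algebraMap_mem _ _)

theorem aux_cyc {k Ω : Type*} [Field k] [Field Ω] [Algebra k Ω] (n : ℕ) [NeZero n] (z : Ω)
    (hz : IsPrimitiveRoot z n) :
    IsCyclotomicExtension {n} k (IntermediateField.adjoin k {z}) := by
  have hint : IsIntegral k z := hz.isIntegral (NeZero.pos n) |>.tower_top
  change IsCyclotomicExtension {n} k (IntermediateField.adjoin k {z}).toSubalgebra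
  rw [IntermediateField.adjoin_simple_toSubalgebra_of_isAlgebraic hint.isAlgebraic]
  exact hz.adjoin_isCyclotomicExtension k

/-- Let `k` be a field of characteristic `≠ 2` with `[k(ζ_8) : k] = 4`
for a primitive `8`-th root of unity `ζ_8` in a fixed algebraic closure (realized inside
the algebraic closure `Ω` of `k(t)`), and let `f(z) = z² + c ∈ k[z]` with `f^r(0) = 0`
for some `r ≥ 1`. Let `K_n` be the splitting field of `f^n(X) − t` over `k(t)` inside
`Ω` (the field generated by the roots, with `F n` the polynomial iterate `f^n` over `k`)
and `K_∞ = ⋃_{n≥1} K_n`. If `A ∈ k` and `α ∈ K_∞` satisfies `α² = A`, then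
`α ∈ k(ζ_8)`. -/
theorem sqrt_in_k_zeta8 (k : Type*) [Field k] (hchar : ringChar k ≠ 2) (c : k)
    (r : ℕ) (hr : 1 ≤ r)
    (hper : (fun z : k => z ^ 2 + c)^[r] 0 = 0)
    (ζ₈ : AlgebraicClosure (RatFunc k)) (hζ₈ : IsPrimitiveRoot ζ₈ 8)
    (hdeg : Module.finrank k (IntermediateField.adjoin k {ζ₈} :
      IntermediateField k (AlgebraicClosure (RatFunc k))) = 4)
    (F : ℕ → Polynomial k)
    (hF0 : F 0 = X)
    (hFs : ∀ m : ℕ, F (m+1) = (X ^ 2 + C c).comp (F m))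
    (A : k) (α : AlgebraicClosure (RatFunc k))
    (hα : α ∈ (⨆ n : ℕ, IntermediateField.adjoin (RatFunc k)
        ((((F (n+1)).map (algebraMap k (RatFunc k)) - C RatFunc.X)).rootSet
          (AlgebraicClosure (RatFunc k))) :
        IntermediateField (RatFunc k) (AlgebraicClosure (RatFunc k))))
    (hsq : α ^ 2 = algebraMap k (AlgebraicClosure (RatFunc k)) A) :
    α ∈ (IntermediateField.adjoin k {ζ₈} :
      IntermediateField k (AlgebraicClosure (RatFunc k))) := by
  have h2k : (2 : k) ≠ 0 := Ring.two_ne_zero hchar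
  rw [← SetLike.mem_coe, IntermediateField.coe_iSup_of_directed
    (aux_direct k c F hF0 hFs).directed_le, Set.mem_iUnion] at hα
  obtain ⟨n, hα⟩ := hα
  obtain ⟨z, hz⟩ := IsAlgClosed.exists_pow_nat_eq ζ₈ (n := 2 ^ (n + 1)) (by positivity)
  have hzp : IsPrimitiveRoot z (2 ^ (n + 1 + 3)) := by
    rw [IsPrimitiveRoot.iff_orderOf]
    refine orderOf_eq_prime_pow ?_ ?_
    · intro h
      rw [pow_add 2 (n + 1) 2, pow_mul, hz] at h
      exact hζ₈.pow_ne_one_of_pos_of_lt (by norm_num) (by norm_num) h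
    · rw [show n + 1 + 2 + 1 = n + 1 + 3 from rfl, pow_add 2 (n + 1) 3, pow_mul, hz]
      exact hζ₈.pow_eq_one
  let E : IntermediateField k (AlgebraicClosure (RatFunc k)) := IntermediateField.adjoin k {z}
  have hzE : z ∈ E := IntermediateField.mem_adjoin_simple_self k z
  let zE : E := ⟨z, hzE⟩
  have hzEp : IsPrimitiveRoot zE (2 ^ (n + 1 + 3)) :=
    IsPrimitiveRoot.of_map_of_injective (f := E.val) hzp E.val.injective
  have h2E : (2 : E) ≠ 0 := by
    intro h
    apply h2k
    apply (algebraMap k E).injective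
    rw [map_ofNat, map_zero, h]
  obtain ⟨b, hb⟩ := aux_square (E := E) h2E (n + 1) (zE ^ (2 ^ 3))
    (hzEp.pow (by positivity) (by rw [pow_add, mul_comm])) c F hF0 hFs A α hα hsq
  have hcyc : IsCyclotomicExtension {2 ^ (n + 1 + 3)} k E :=
    aux_cyc (2 ^ (n + 1 + 3)) z hzp
  have hfd : FiniteDimensional k E := IsCyclotomicExtension.finiteDimensional {2 ^ (n + 1 + 3)} k E
  have hgal : IsGalois k E := IsCyclotomicExtension.isGalois {2 ^ (n + 1 + 3)} k E
  have hval : E.val (zE ^ (2 ^ (n + 1))) = ζ₈ := by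
    rw [map_pow]; exact hz
  have hmin : minpoly k (zE ^ (2 ^ (n + 1))) = minpoly k ζ₈ := by
    rw [← hval, minpoly.algHom_eq _ E.val.injective]
  have hint : IsIntegral k ζ₈ := by
    rw [← hval]
    exact (Algebra.IsIntegral.isIntegral (R := k) (zE ^ (2 ^ (n + 1)))).map E.val
  have hb8 := aux_galois (k := k) (L := E) (n + 1) zE hzEp
    (by
      have := IntermediateField.lift_injective E
      apply this
      rw [IntermediateField.lift_adjoin_simple, IntermediateField.lift_top])
    (by rw [hmin, ← IntermediateField.adjoin.finrank hint, hdeg]) A b hb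
  have hbm : E.val b ∈ IntermediateField.adjoin k {ζ₈} := by
    have h := (IntermediateField.mem_map (f := E.val) _).mpr ⟨b, hb8, rfl⟩
    rw [IntermediateField.adjoin_map, Set.image_singleton, hval] at h
    exact h
  have hαb : α ^ 2 = (E.val b) ^ 2 := by
    rw [hsq, ← map_pow, hb, AlgHom.commutes]
  rcases sq_eq_sq_iff_eq_or_eq_neg.mp hαb with h | h
  · rw [h]; exact hbm
  · rw [h]; exact neg_mem hbm
end
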